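/- Let X be a smooth projective variety of dimension 2d over ℂ and let ℰ ∈ D^b(X) be a ℙ^d-object with associated ℙ^d-twist P_ℰ. Then for every t > 0, h_t(P_ℰ) ≤ 0. -/

import Mathlib

open CategoryTheory CategoryTheory.Limits CategoryTheory.Pretriangulated Filter

universe v u

variable (C : Type u) [Category.{v} C] [Preadditive C] [HasZeroObject C]
  [HasShift C ℤ] [∀ n : ℤ, (shiftFunctor C n).Additive] [Pretriangulated C]
  [HasFiniteBiproducts C] [CategoryTheory.Linear ℂ C]
  [∀ X Y : C, Module.Finite ℂ (X ⟶ Y)]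

/-- `BuildVal E t B r` : the object `B` can be built from the zero object by a tower of
`k` distinguished triangles whose successive cones are shifts `E⟦nᵢ⟧` of `E`,
with total weight `r = ∑ᵢ exp(nᵢ t)`. -/
inductive BuildVal (E : C) (t : ℝ) : C → ℝ → Prop
  | zero (Z : C) (hZ : IsZero Z) : BuildVal E t Z 0
  | step (A B : C) (n : ℤ) (r : ℝ)
      (f : A ⟶ B) (g : B ⟶ (shiftFunctor C n).obj E)
      (h : (shiftFunctor C n).obj E ⟶ (shiftFunctor C (1 : ℤ)).obj A)
      (hT : Triangle.mk f g h ∈ distTriang C)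
      (hA : BuildVal E t A r) :
      BuildVal E t B (r + Real.exp ((n : ℝ) * t))

/-- The set of weights `∑ᵢ exp(nᵢ t)` of towers of distinguished triangles with cones
shifts of `E`, ending at an object isomorphic to `F ⊕ F'` for some `F'`. -/
def complexitySet (E F : C) (t : ℝ) : Set ℝ :=
  {r | ∃ B F' : C, BuildVal C E t B r ∧ Nonempty (B ≅ F ⊞ F')}

/-- The complexity `δ_t(E, F)` of `F` relative to `E` (Dimitrov–Haiden–Katzarkov–Kontsevich). -/
noncomputable def complexity (E F : C) (t : ℝ) : ℝ :=
  sInf (complexitySet C E F t)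

/-- `F` lies in the split closure `⟨E⟩` of `E` (expressed via towers). -/
def InSplitClosure (E F : C) : Prop :=
  (complexitySet C E F 0).Nonempty

/-- `G` is a split generator of the triangulated category. -/
def IsSplitGenerator (G : C) : Prop :=
  ∀ F : C, InSplitClosure C G F

/-- The right orthogonal `E^⊥ = {F : Hom^*(E,F) = 0}`. -/
def rightOrthogonal (E : C) : Set C :=
  {F | ∀ (n : ℤ) (f : E ⟶ (shiftFunctor C n).obj F), f = 0}

/-- A `ℙ^d`-object in a ℂ-linear triangulated category (an abstract model of a `ℙ^d`-object
in `D^b(X)` for `X` smooth projective of dimension `2d` over `ℂ`, in the sense of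
Huybrechts–Thomas): `E` is a `2d`-Calabi–Yau object (the Serre-duality reformulation of
`E ⊗ ω_X ≅ E`) and the graded ring `Hom^*(E,E)` is isomorphic to
`H^*(ℙ^d; ℂ) = ℂ[h]/(h^{d+1})`, `deg h = 2`: the graded pieces `Hom^{2k}(E,E)`, `0 ≤ k ≤ d`,
are one-dimensional, spanned by the powers `h^k`, and all other graded pieces vanish. -/
structure PdObject (d : ℕ) where
  E : C
  nonzero : ¬ IsZero E
  /-- Serre-duality form of `E ⊗ ω_X ≅ E` on a `2d`-dimensional variety:
  `Hom(E, F) ≅ Hom(F, E[2d])^∨` for every `F`. -/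
  CY : ∀ F : C, (E ⟶ F) ≃ₗ[ℂ] Module.Dual ℂ (F ⟶ (shiftFunctor C (2 * (d : ℤ))).obj E)
  /-- a generator `h ∈ Hom²(E, E)`. -/
  h : E ⟶ (shiftFunctor C (2 : ℤ)).obj E
  /-- the powers `h^k ∈ Hom^{2k}(E, E)` of `h`. -/
  hpow : ∀ k : ℕ, (E ⟶ (shiftFunctor C (2 * (k : ℤ))).obj E)
  hpow_zero : hpow 0 = (shiftFunctorZero' C (2 * ((0 : ℕ) : ℤ)) (by simp)).inv.app E
  hpow_succ : ∀ k : ℕ,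
    hpow (k + 1) = h ≫ (shiftFunctor C (2 : ℤ)).map (hpow k) ≫
      (shiftFunctorAdd' C (2 * (k : ℤ)) (2 : ℤ) (2 * ((k + 1 : ℕ) : ℤ))
        (by push_cast; ring)).inv.app E
  /-- `Hom^{2k}(E,E)` is one-dimensional for `0 ≤ k ≤ d`. -/
  hom_rank_one : ∀ k : ℕ, k ≤ d →
    Module.finrank ℂ (E ⟶ (shiftFunctor C (2 * (k : ℤ))).obj E) = 1
  /-- all other graded pieces of `Hom^*(E,E)` vanish. -/
  hom_rank_zero : ∀ n : ℤ, (¬ ∃ k : ℕ, k ≤ d ∧ n = 2 * (k : ℤ)) →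
    ∀ f : E ⟶ (shiftFunctor C n).obj E, f = 0
  /-- the powers `h^k`, `k ≤ d`, are nonzero (so they span the graded pieces). -/
  hpow_ne_zero : ∀ k : ℕ, k ≤ d → hpow k ≠ 0

/-- The `ℙ^d`-twist `P_E` associated to a `ℙ^d`-object `E` (Huybrechts–Thomas):
an autoequivalence `P` such that each `P(F)` is obtained by the double cone construction
`P(F) = Cone(Cone(Hom^{*-2}(E,F) ⊗ E → Hom^*(E,F) ⊗ E) → F)`.
Here `H F` models the object `Hom^*(E,F) ⊗ E`, i.e. the finite direct sum of shifts
`E[-n]` with multiplicity `dim Hom^n(E,F)`, so that `Hom^{*-2}(E,F) ⊗ E = (H F)[-2]`;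
`θ F` models the map `h^∨·id − id·h`; `T F` models its cone; and `P F` is the cone of
the induced evaluation map `T F → F`. -/
structure PdTwist (d : ℕ) extends PdObject C d where
  /-- the twist autoequivalence. -/
  P : C ≌ C
  /-- the twist commutes with the shift functors. -/
  commShift : P.functor.CommShift ℤ
  /-- `H F` models `Hom^*(E,F) ⊗ E`. -/
  H : C → C
  /-- `H F` is a finite direct sum of shifts `E[-n]`, with multiplicity
  `dim_ℂ Hom^n(E,F)` for each `n`. -/
  H_iso : ∀ F : C, ∃ (k : ℕ) (ns : Fin k → ℤ),
    Nonempty (H F ≅ biproduct (fun i => (shiftFunctor C (ns i)).obj E)) ∧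
    ∀ n : ℤ, (Finset.univ.filter fun i => ns i = -n).card
        = Module.finrank ℂ (E ⟶ (shiftFunctor C n).obj F)
  /-- the map `h^∨·id − id·h : Hom^{*-2}(E,F) ⊗ E → Hom^*(E,F) ⊗ E`. -/
  θ : ∀ F : C, (shiftFunctor C (-2 : ℤ)).obj (H F) ⟶ H F
  /-- the inner cone `T F = Cone(θ F)`. -/
  T : C → C
  ι : ∀ F : C, H F ⟶ T F
  π : ∀ F : C, T F ⟶ (shiftFunctor C (1 : ℤ)).obj ((shiftFunctor C (-2 : ℤ)).obj (H F))
  innerTri : ∀ F : C, Triangle.mk (θ F) (ι F) (π F) ∈ distTriang C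
  /-- the map `T F → F` induced by the evaluation `Hom^*(E,F) ⊗ E → F`. -/
  ev : ∀ F : C, T F ⟶ F
  η : ∀ F : C, F ⟶ P.functor.obj F
  dl : ∀ F : C, P.functor.obj F ⟶ (shiftFunctor C (1 : ℤ)).obj (T F)
  /-- `P F = Cone(T F → F)`. -/
  outerTri : ∀ F : C, Triangle.mk (ev F) (η F) (dl F) ∈ distTriang C

theorem aux_fitting {Γ : Type*} [Ring Γ] [Algebra ℂ Γ] [Module.Finite ℂ Γ] (y : Γ) :
    ∃ (m : ℕ) (z : Γ), Commute y z ∧ y ^ (m+1) * (y ^ (m+1) * z ^ (m+1)) = y ^ (m+1) := by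
  let S := Algebra.adjoin ℂ {y}
  have : IsArtinianRing S := by
    have : Module.Finite ℂ S := inferInstanceAs (Module.Finite ℂ (Subalgebra.toSubmodule S))
    exact IsArtinianRing.of_finite ℂ S
  let y' : S := ⟨y, Algebra.self_mem_adjoin_singleton ℂ y⟩
  have : IsMulCommutative S := Algebra.isMulCommutative_adjoin ℂ (by
    intro a ha b hb
    rw [Set.mem_singleton_iff] at ha hb; rw [ha, hb])
  obtain ⟨n, z, hz⟩ := IsArtinian.exists_pow_succ_smul_dvd (R := S) y' (1 : S)
  have hz' : y' ^ (n+1) * z = y' ^ n := by simpa using hz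
  have key : ∀ k, y' ^ n * (y' ^ k * z ^ k) = y' ^ n := by
    intro k
    induction k with
    | zero => simp
    | succ k ih =>
      calc y' ^ n * (y' ^ (k+1) * z ^ (k+1)) = (y' ^ (n+1) * z) * (y' ^ k * z ^ k) := by ring
        _ = _ := by rw [hz', ih]
  refine ⟨n, (z : Γ), ?_, ?_⟩
  · have : y' * z = z * y' := mul_comm _ _
    exact congrArg Subtype.val this
  · have : y' ^ (n+1) * (y' ^ (n+1) * z ^ (n+1)) = y' ^ (n+1) := by
      have := key (n+1)
      calc y' ^ (n+1) * (y' ^ (n+1) * z ^ (n+1)) = y' * (y' ^ n * (y' ^ (n+1) * z ^ (n+1))) := by ring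
        _ = _ := by rw [this]; ring
    exact congrArg Subtype.val this

theorem aux_ring {Γ : Type*} [Ring Γ] [Algebra ℂ Γ] [Module.Finite ℂ Γ] (I : Ideal Γ) :
    ∃ e ∈ I, e * e = e ∧ ∀ x ∈ I, IsNilpotent (x * (1 - e)) := by
  have hN : IsNoetherianRing Γ := IsNoetherianRing.of_finite ℂ Γ
  obtain ⟨J, ⟨e, heI, hee, rfl⟩, hmax⟩ := set_has_maximal_iff_noetherian.mpr hN
    {J : Ideal Γ | ∃ e ∈ I, e * e = e ∧ J = Ideal.span {e}} ⟨_, 0, I.zero_mem, by simp, rfl⟩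
  refine ⟨e, heI, hee, fun x hx => ?_⟩
  obtain ⟨m, z, hc, hz⟩ := aux_fitting (x * (1 - e))
  set y := x * (1 - e) with hy
  have hye : y * e = 0 := by rw [hy, mul_assoc, sub_mul, hee]; simp
  have hyI : y ∈ I := by
    rw [hy, mul_sub, mul_one]; exact I.sub_mem hx (I.mul_mem_left _ heI)
  set f := y ^ (m+1) * z ^ (m+1) with hf
  have hf' : f = z ^ (m+1) * y ^ (m+1) := (hc.pow_pow _ _).eq
  have hff : f * f = f := by
    nth_rewrite 1 [hf']; rw [mul_assoc, hz, ← hf']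
  have hfe : f * e = 0 := by
    rw [hf', pow_succ y, mul_assoc, mul_assoc, hye]; simp
  have hfI : f ∈ I := by
    rw [hf', pow_succ y, ← mul_assoc]; exact I.mul_mem_left _ hyI
  have hef : (e + f - e * f) * (e + f - e * f) = e + f - e * f := by
    have h1 : e * (e * f) = e * f := by rw [← mul_assoc, hee]
    have h2 : f * (e * f) = 0 := by rw [← mul_assoc, hfe, zero_mul]
    have h3 : e * f * e = 0 := by rw [mul_assoc, hfe, mul_zero]
    have h4 : e * f * f = e * f := by rw [mul_assoc, hff]
    have h5 : e * f * (e * f) = 0 := by rw [mul_assoc, h2, mul_zero]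
    simp only [mul_add, add_mul, mul_sub, sub_mul, hee, hff, hfe, h1, h2, h3, h4, h5]
    abel
  have hnot := hmax (Ideal.span {e + f - e * f}) ⟨_, I.sub_mem (I.add_mem heI hfI)
    (I.mul_mem_left _ hfI), hef, rfl⟩
  have hle : Ideal.span {e} ≤ Ideal.span {e + f - e * f} := by
    rw [Ideal.span_singleton_le_iff_mem, Ideal.mem_span_singleton']
    exact ⟨e, by rw [mul_sub, mul_add, hee, ← mul_assoc e e f, hee]; abel⟩
  have hge : f ∈ Ideal.span {e} := by
    by_contra hcon
    apply hnot
    refine lt_of_le_not_ge hle (fun h => hcon (h ?_))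
    rw [Ideal.mem_span_singleton']
    exact ⟨f, by rw [mul_sub, mul_add, hff, ← mul_assoc f e f, hfe]; simp⟩
  rw [Ideal.mem_span_singleton'] at hge
  obtain ⟨a, ha⟩ := hge
  have hf0 : f = 0 := by
    have : f * e = f := by rw [← ha, mul_assoc, hee]
    rw [← this, hfe]
  refine ⟨m+1, ?_⟩
  rw [← hz, hf0, mul_zero]

theorem aux_ring_unit {Γ : Type*} [Ring Γ] [Algebra ℂ Γ] [Module.Finite ℂ Γ] (I : Ideal Γ) :
    ∃ e ∈ I, e * e = e ∧ ∀ Z : Γ, ∀ x ∈ I,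
      IsUnit (1 + (1 - e) * Z * e + x * (1 - e)) := by
  obtain ⟨e, heI, hee, hnil⟩ := aux_ring I
  refine ⟨e, heI, hee, fun Z x hx => ?_⟩
  set M := (1 - e) * Z * e with hM
  have hMM : M * M = 0 := by
    have : e * (1 - e) = 0 := by rw [mul_sub, hee]; simp
    calc M * M = (1 - e) * Z * (e * (1 - e)) * Z * e := by rw [hM]; noncomm_ring
      _ = 0 := by rw [this]; simp
  have h1 : IsUnit (1 - M) := by
    refine IsNilpotent.isUnit_one_sub ⟨2, by rw [pow_two, hMM]⟩
  have h2 : IsUnit ((1 - M) * (1 + M + x * (1 - e))) := by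
    have : (1 - M) * (1 + M + x * (1 - e)) = 1 + ((1 - M) * x) * (1 - e) := by
      have : (1 - M) * (1 + M + x * (1 - e)) = 1 - M * M + ((1 - M) * x) * (1 - e) := by
        noncomm_ring
      rw [this, hMM, sub_zero]
    rw [this]
    exact IsNilpotent.isUnit_one_add (hnil _ (I.mul_mem_left _ hx))
  obtain ⟨w, hw⟩ := h1
  rw [← hw] at h2
  exact (Units.isUnit_units_mul w _).mp h2

section Aux
variable {C : Type u} [Category.{v} C] [Preadditive C] [HasZeroObject C]
  [HasShift C ℤ] [∀ n : ℤ, (shiftFunctor C n).Additive] [Pretriangulated C]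

theorem ex_fg {A B X W : C} {f : A ⟶ B} {g : B ⟶ X} {h : X ⟶ A⟦(1:ℤ)⟧}
    (hT : Triangle.mk f g h ∈ distTriang C) (x : W ⟶ B) (hx : x ≫ g = 0) : ∃ z, x = z ≫ f :=
  Triangle.coyoneda_exact₂ _ hT x hx

theorem ex_gh {A B X W : C} {f : A ⟶ B} {g : B ⟶ X} {h : X ⟶ A⟦(1:ℤ)⟧}
    (hT : Triangle.mk f g h ∈ distTriang C) (x : W ⟶ X) (hx : x ≫ h = 0) : ∃ z, x = z ≫ g :=
  Triangle.coyoneda_exact₃ _ hT x hx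

theorem ex_hf {A B X W : C} {f : A ⟶ B} {g : B ⟶ X} {h : X ⟶ A⟦(1:ℤ)⟧}
    (hT : Triangle.mk f g h ∈ distTriang C) (x : W ⟶ A⟦(1:ℤ)⟧) (hx : x ≫ f⟦(1:ℤ)⟧' = 0) :
    ∃ z, x = z ≫ h :=
  Triangle.coyoneda_exact₁ _ hT x hx

theorem ex_fg1 {A B X W : C} {f : A ⟶ B} {g : B ⟶ X} {h : X ⟶ A⟦(1:ℤ)⟧}
    (hT : Triangle.mk f g h ∈ distTriang C) (x : W ⟶ B⟦(1:ℤ)⟧) (hx : x ≫ g⟦(1:ℤ)⟧' = 0) :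
    ∃ z, x = z ≫ f⟦(1:ℤ)⟧' := by
  obtain ⟨z, hz⟩ : ∃ z : W ⟶ A⟦(1:ℤ)⟧, x = z ≫ (-f⟦(1:ℤ)⟧') :=
    Triangle.coyoneda_exact₁ _ (rot_of_distTriang _ hT) x hx
  exact ⟨-z, by rw [hz]; simp⟩

theorem ex_gh1 {A B X W : C} {f : A ⟶ B} {g : B ⟶ X} {h : X ⟶ A⟦(1:ℤ)⟧}
    (hT : Triangle.mk f g h ∈ distTriang C) (x : W ⟶ X⟦(1:ℤ)⟧) (hx : x ≫ h⟦(1:ℤ)⟧' = 0) :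
    ∃ z, x = z ≫ g⟦(1:ℤ)⟧' := by
  obtain ⟨z, hz⟩ : ∃ z : W ⟶ B⟦(1:ℤ)⟧, x = z ≫ (-g⟦(1:ℤ)⟧') :=
    Triangle.coyoneda_exact₁ _ (rot_of_distTriang _ (rot_of_distTriang _ hT)) x hx
  exact ⟨-z, by rw [hz]; simp⟩

theorem co_fg {A B X W : C} {f : A ⟶ B} {g : B ⟶ X} {h : X ⟶ A⟦(1:ℤ)⟧}
    (hT : Triangle.mk f g h ∈ distTriang C) (x : B ⟶ W) (hx : f ≫ x = 0) : ∃ z, x = g ≫ z :=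
  Triangle.yoneda_exact₂ _ hT x hx

theorem co_gh {A B X W : C} {f : A ⟶ B} {g : B ⟶ X} {h : X ⟶ A⟦(1:ℤ)⟧}
    (hT : Triangle.mk f g h ∈ distTriang C) (x : X ⟶ W) (hx : g ≫ x = 0) : ∃ z, x = h ≫ z :=
  Triangle.yoneda_exact₃ _ hT x hx

theorem z_fg {A B X : C} {f : A ⟶ B} {g : B ⟶ X} {h : X ⟶ A⟦(1:ℤ)⟧}
    (hT : Triangle.mk f g h ∈ distTriang C) : f ≫ g = 0 := comp_distTriang_mor_zero₁₂ _ hT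
theorem z_gh {A B X : C} {f : A ⟶ B} {g : B ⟶ X} {h : X ⟶ A⟦(1:ℤ)⟧}
    (hT : Triangle.mk f g h ∈ distTriang C) : g ≫ h = 0 := comp_distTriang_mor_zero₂₃ _ hT
theorem z_hf {A B X : C} {f : A ⟶ B} {g : B ⟶ X} {h : X ⟶ A⟦(1:ℤ)⟧}
    (hT : Triangle.mk f g h ∈ distTriang C) : h ≫ f⟦(1:ℤ)⟧' = 0 := comp_distTriang_mor_zero₃₁ _ hT

theorem tr_c {A B X A2 B2 X2 : C} {f : A ⟶ B} {g : B ⟶ X} {h : X ⟶ A⟦(1:ℤ)⟧}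
    (hT : Triangle.mk f g h ∈ distTriang C) {f2 : A2 ⟶ B2} {g2 : B2 ⟶ X2} {h2 : X2 ⟶ A2⟦(1:ℤ)⟧}
    (hT2 : Triangle.mk f2 g2 h2 ∈ distTriang C) (a : A ⟶ A2) (b : B ⟶ B2)
    (comm : f ≫ b = a ≫ f2) : ∃ c : X ⟶ X2, g ≫ c = b ≫ g2 ∧ h ≫ a⟦(1:ℤ)⟧' = c ≫ h2 :=
  complete_distinguished_triangle_morphism _ _ hT hT2 a b comm
theorem tr_a {A B X A2 B2 X2 : C} {f : A ⟶ B} {g : B ⟶ X} {h : X ⟶ A⟦(1:ℤ)⟧}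
    (hT : Triangle.mk f g h ∈ distTriang C) {f2 : A2 ⟶ B2} {g2 : B2 ⟶ X2} {h2 : X2 ⟶ A2⟦(1:ℤ)⟧}
    (hT2 : Triangle.mk f2 g2 h2 ∈ distTriang C) (b : B ⟶ B2) (c : X ⟶ X2)
    (comm : g ≫ c = b ≫ g2) : ∃ a : A ⟶ A2, f ≫ b = a ≫ f2 ∧ h ≫ a⟦(1:ℤ)⟧' = c ≫ h2 :=
  complete_distinguished_triangle_morphism₁ _ _ hT hT2 b c comm
theorem tr_b {A B X A2 B2 X2 : C} {f : A ⟶ B} {g : B ⟶ X} {h : X ⟶ A⟦(1:ℤ)⟧}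
    (hT : Triangle.mk f g h ∈ distTriang C) {f2 : A2 ⟶ B2} {g2 : B2 ⟶ X2} {h2 : X2 ⟶ A2⟦(1:ℤ)⟧}
    (hT2 : Triangle.mk f2 g2 h2 ∈ distTriang C) (a : A ⟶ A2) (c : X ⟶ X2)
    (comm : h ≫ a⟦(1:ℤ)⟧' = c ≫ h2) : ∃ b : B ⟶ B2, f ≫ b = a ≫ f2 ∧ g ≫ c = b ≫ g2 :=
  complete_distinguished_triangle_morphism₂ _ _ hT hT2 a c comm

theorem aux_core {A B Y E1 E2 : C} {iB : A ⟶ B} {g : B ⟶ Y} {y : Y ⟶ A⟦(1:ℤ)⟧}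
    (hT1 : Triangle.mk iB g y ∈ distTriang C) {j : E1 ⟶ Y} {q : Y ⟶ E2} {w : E2 ⟶ E1⟦(1:ℤ)⟧}
    (hT2 : Triangle.mk j q w ∈ distTriang C) :
    ∃ (A' X : C) (i : A ⟶ A') (p : A' ⟶ E1) (b : A' ⟶ B) (g' : B ⟶ X) (h' : X ⟶ A'⟦(1:ℤ)⟧)
      (ζ : X ⟶ E2) (ω : Y ⟶ X) (κ' : E2 ⟶ X),
      Triangle.mk i p (j ≫ y) ∈ distTriang C ∧ Triangle.mk b g' h' ∈ distTriang C ∧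
      i ≫ b = iB ∧ p ≫ j = b ≫ g ∧ g' ≫ ζ = g ≫ q ∧ h' ≫ p⟦(1:ℤ)⟧' = ζ ≫ w ∧ g ≫ ω = g' ∧
      y ≫ i⟦(1:ℤ)⟧' = ω ≫ h' ∧ g ≫ q ≫ κ' = g' := by
  obtain ⟨A', i, p, hA'⟩ := distinguished_cocone_triangle₂ (j ≫ y)
  obtain ⟨b, hb1, hb2⟩ : ∃ b : A' ⟶ B, i ≫ b = iB ∧ p ≫ j = b ≫ g := by
    obtain ⟨b, hb1, hb2⟩ := tr_b hA' hT1 (𝟙 A) j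
      (by simp)
    exact ⟨b, by simpa using hb1, hb2⟩
  obtain ⟨X, g', h', hX⟩ := distinguished_cocone_triangle b
  obtain ⟨ζ, hζ1, hζ2⟩ : ∃ ζ : X ⟶ E2, g' ≫ ζ = g ≫ q ∧ h' ≫ p⟦(1:ℤ)⟧' = ζ ≫ w :=
    tr_c hX hT2 p g hb2.symm
  obtain ⟨ω, hω1, hω2⟩ : ∃ ω : Y ⟶ X, g ≫ ω = 𝟙 B ≫ g' ∧ y ≫ i⟦(1:ℤ)⟧' = ω ≫ h' :=
    tr_c hT1 hX i (𝟙 B) (by simpa using hb1.symm)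
  rw [Category.id_comp] at hω1
  obtain ⟨F, φ, h3, hF⟩ := distinguished_cocone_triangle₁ (g ≫ q)
  have hφ : φ ≫ g' = 0 := by
    have h0 : φ ≫ g ≫ q = 0 := z_fg hF
    obtain ⟨ψ, hψ⟩ := ex_fg hT2 (φ ≫ g) (by simpa using h0)
    obtain ⟨ψ', hψ'⟩ := ex_gh hA' ψ (by
      rw [← Category.assoc, ← hψ, Category.assoc, z_gh hT1, comp_zero])
    obtain ⟨ψ'', hψ''⟩ := ex_fg hT1 (φ - ψ' ≫ b) (by
      rw [Preadditive.sub_comp, Category.assoc, ← hb2, ← Category.assoc, ← hψ', ← hψ, sub_self])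
    have : φ = (ψ' + ψ'' ≫ i) ≫ b := by
      rw [Preadditive.add_comp, Category.assoc, hb1, ← hψ'']; abel
    rw [this, Category.assoc, z_fg hX, comp_zero]
  obtain ⟨κ', hκ'⟩ := co_fg hF g' hφ
  exact ⟨A', X, i, p, b, g', h', ζ, ω, κ', hA', hX, hb1, hb2, hζ1, hζ2, hω1, hω2, by
    rw [hκ', Category.assoc]⟩

end Aux

section Aux
variable {C}

theorem aux_split {A B Y E1 E2 : C} {iB : A ⟶ B} {g : B ⟶ Y} {y : Y ⟶ A⟦(1:ℤ)⟧}
    (hT1 : Triangle.mk iB g y ∈ distTriang C) {j : E1 ⟶ Y} {q : Y ⟶ E2} {w : E2 ⟶ E1⟦(1:ℤ)⟧}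
    (hT2 : Triangle.mk j q w ∈ distTriang C) (σ : E2 ⟶ Y) (r : Y ⟶ E1) (hσ : σ ≫ q = 𝟙 E2)
    (hr : q ≫ σ + r ≫ j = 𝟙 Y) :
    ∃ (A' X : C) (i : A ⟶ A') (p : A' ⟶ E1) (y' : E1 ⟶ A⟦(1:ℤ)⟧) (b : A' ⟶ B) (g' : B ⟶ X)
      (h' : X ⟶ A'⟦(1:ℤ)⟧),
      Triangle.mk i p y' ∈ distTriang C ∧ Triangle.mk b g' h' ∈ distTriang C ∧
      Nonempty (Retract X E2) := by
  obtain ⟨A', X, i, p, b, g', h', ζ, ω, κ', hA', hX, hb1, hb2, hζ1, hζ2, hω1, hω2, hκ'⟩ :=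
    aux_core hT1 hT2
  refine ⟨A', X, i, p, j ≫ y, b, g', h', hA', hX, ?_⟩
  have hw : w = 0 := by
    rw [← Category.id_comp w, ← hσ, Category.assoc, z_gh hT2, comp_zero]
  obtain ⟨a1, ha1⟩ := ex_fg1 hA' h' (by rw [hζ2, hw, comp_zero])
  obtain ⟨β, hβ⟩ := ex_hf hT1 a1 (by
    rw [← hb1, Functor.map_comp, ← Category.assoc, ← ha1]; exact z_hf hX)
  obtain ⟨κ, hκ⟩ : ∃ κ, κ = σ ≫ ω := ⟨_, rfl⟩
  obtain ⟨h, hh⟩ : ∃ h, h = σ ≫ y ≫ i⟦(1:ℤ)⟧' := ⟨_, rfl⟩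
  have hκh : κ ≫ h' = h := by rw [hκ, hh, Category.assoc, hω2]
  have hyi : y ≫ i⟦(1:ℤ)⟧' = q ≫ h := by
    have : y ≫ i⟦(1:ℤ)⟧' = (q ≫ σ + r ≫ j) ≫ y ≫ i⟦(1:ℤ)⟧' := by rw [hr, Category.id_comp]
    rw [this, Preadditive.add_comp, hh]
    have h2 : (j ≫ y) ≫ i⟦(1:ℤ)⟧' = 0 := z_hf hA'
    simp only [Category.assoc] at h2 ⊢
    rw [h2, comp_zero, add_zero]
  obtain ⟨γ, hγ⟩ : ∃ γ, γ = β ≫ q := ⟨_, rfl⟩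
  have hγh : h' = γ ≫ h := by rw [hγ, Category.assoc, ← hyi, ← Category.assoc, ← hβ, ← ha1]
  obtain ⟨u, hu⟩ := co_gh hX (ζ ≫ κ' - 𝟙 X) (by
    rw [Preadditive.comp_sub, ← Category.assoc, hζ1, Category.assoc, hκ', Category.comp_id,
      sub_self])
  obtain ⟨v, hv⟩ := ex_gh hX (γ ≫ κ - 𝟙 X) (by
    rw [Preadditive.sub_comp, Category.assoc, hκh, ← hγh, Category.id_comp, sub_self])
  obtain ⟨t, ht⟩ := co_gh hX (ζ ≫ h) (by
    rw [← Category.assoc, hζ1, Category.assoc, ← hyi, ← Category.assoc, z_gh hT1, zero_comp])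
  let I : Ideal (End X) :=
    { carrier := {a | ∃ u : A'⟦(1:ℤ)⟧ ⟶ X, a = h' ≫ u}
      add_mem' := by
        rintro a b ⟨u, rfl⟩ ⟨v, rfl⟩
        exact ⟨u + v, (Preadditive.comp_add _ _ _ _ _ _).symm⟩
      zero_mem' := ⟨0, comp_zero.symm⟩
      smul_mem' := by
        rintro c x ⟨u, rfl⟩
        exact ⟨u ≫ c, by simp [End.mul_def]⟩ }
  have : Module.Finite ℂ (End X) := inferInstanceAs (Module.Finite ℂ (X ⟶ X))
  obtain ⟨e, ⟨u0, hu0⟩, hee, H⟩ := aux_ring_unit I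
  obtain ⟨e', he'⟩ : ∃ e' : X ⟶ X, e' = e := ⟨_, rfl⟩
  have hee' : e' ≫ e' = e' := by rw [he']; exact hee
  have heu : e' = h' ≫ u0 := by rw [he']; exact hu0
  have hg : v ≫ g' ≫ e' = 0 := by rw [heu, ← Category.assoc g', z_gh hX]; simp
  have h1 := H (γ ≫ κ' : X ⟶ X) ((h' ≫ u ≫ (𝟙 X - e') + h' ≫ t ≫ u0 : X ⟶ X))
    ⟨u ≫ (𝟙 X - e') + t ≫ u0, by simp⟩
  rw [← he'] at h1
  replace h1 : IsUnit (M := End X) (𝟙 X + e' ≫ (γ ≫ κ') ≫ (𝟙 X - e') +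
      (𝟙 X - e') ≫ (h' ≫ u ≫ (𝟙 X - e') + h' ≫ t ≫ u0) : X ⟶ X) := h1
  have h2 : (𝟙 X + e' ≫ (γ ≫ κ') ≫ (𝟙 X - e') +
      (𝟙 X - e') ≫ (h' ≫ u ≫ (𝟙 X - e') + h' ≫ t ≫ u0) : X ⟶ X) =
      ((𝟙 X - e') ≫ ζ + e' ≫ γ) ≫ (κ' ≫ (𝟙 X - e') + κ ≫ e') := by
    have e1 : (𝟙 X - e') ≫ ζ ≫ κ' ≫ (𝟙 X - e') =
        (𝟙 X - e') + (𝟙 X - e') ≫ h' ≫ u ≫ (𝟙 X - e') := by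
      have : ζ ≫ κ' = 𝟙 X + h' ≫ u := by rw [← hu]; abel
      rw [← Category.assoc ζ, this]
      simp only [Preadditive.add_comp, Preadditive.comp_add, Category.id_comp, Category.assoc,
        Preadditive.sub_comp, Preadditive.comp_sub, Category.comp_id, hee']
      abel
    have e2 : (𝟙 X - e') ≫ ζ ≫ κ ≫ e' = (𝟙 X - e') ≫ h' ≫ t ≫ u0 := by
      rw [heu, ← Category.assoc κ, hκh, ← Category.assoc ζ, ht, Category.assoc]
    have e3 : e' ≫ γ ≫ κ ≫ e' = e' := by
      have : γ ≫ κ = 𝟙 X + v ≫ g' := by rw [← hv]; abel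
      rw [← Category.assoc γ, this, Preadditive.add_comp, Category.assoc, hg]
      simp [hee']
    have : ((𝟙 X - e') ≫ ζ + e' ≫ γ) ≫ (κ' ≫ (𝟙 X - e') + κ ≫ e') =
      (𝟙 X - e') ≫ ζ ≫ κ' ≫ (𝟙 X - e') + (𝟙 X - e') ≫ ζ ≫ κ ≫ e' +
       (e' ≫ γ ≫ κ' ≫ (𝟙 X - e') + e' ≫ γ ≫ κ ≫ e') := by
      simp only [Preadditive.add_comp, Preadditive.comp_add, Category.assoc]
      abel
    rw [this, e1, e2, e3]
    rw [Preadditive.comp_add]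
    simp only [Category.assoc]
    abel
  rw [h2] at h1
  obtain ⟨m, hm⟩ := h1.exists_left_inv
  refine ⟨⟨(𝟙 X - e') ≫ ζ + e' ≫ γ, (κ' ≫ (𝟙 X - e') + κ ≫ e') ≫ m, ?_⟩⟩
  rw [← Category.assoc]; exact hm

end Aux

section Aux
variable {C}

theorem aux_gen {A B Y E1 E2 L : C} {iB : A ⟶ B} {g : B ⟶ Y} {y : Y ⟶ A⟦(1:ℤ)⟧}
    (hT1 : Triangle.mk iB g y ∈ distTriang C) {j : E1 ⟶ Y} {q : Y ⟶ E2} {w : E2 ⟶ E1⟦(1:ℤ)⟧}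
    (hT2 : Triangle.mk j q w ∈ distTriang C) (k : L ⟶ Y) (hk1 : ∀ f : E2 ⟶ Y, ∃ c, f = c ≫ k)
    (hk2 : ∀ f : Y ⟶ Y, ∃ c, k ≫ f = c ≫ k) :
    ∃ (A' X : C) (i : A ⟶ A') (p : A' ⟶ E1) (y' : E1 ⟶ A⟦(1:ℤ)⟧) (b : A' ⟶ B) (g' : B ⟶ X)
      (h' : X ⟶ A'⟦(1:ℤ)⟧),
      Triangle.mk i p y' ∈ distTriang C ∧ Triangle.mk b g' h' ∈ distTriang C ∧
      Nonempty (Retract X (E2 ⊞ (E2 ⊞ L))) := by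
  obtain ⟨A', X, i, p, b, g', h', ζ, ω, κ', hA', hX, hb1, hb2, hζ1, hζ2, hω1, hω2, hκ'⟩ :=
    aux_core hT1 hT2
  refine ⟨A', X, i, p, j ≫ y, b, g', h', hA', hX, ?_⟩
  have hip : i⟦(1:ℤ)⟧' ≫ p⟦(1:ℤ)⟧' = 0 := by rw [← Functor.map_comp, z_fg hA', Functor.map_zero]
  obtain ⟨s, hs⟩ := ex_gh1 hA' w (by
    rw [Functor.map_comp, ← Category.assoc, z_hf hT2, zero_comp])
  obtain ⟨a, ha⟩ := ex_fg1 hT1 (s ≫ b⟦(1:ℤ)⟧') (by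
    rw [Category.assoc, ← Functor.map_comp, ← hb2, Functor.map_comp, ← Category.assoc, ← hs]
    exact z_hf hT2)
  obtain ⟨s1, hs1⟩ : ∃ s1, s1 = s - a ≫ i⟦(1:ℤ)⟧' := ⟨_, rfl⟩
  have hs1b : s1 ≫ b⟦(1:ℤ)⟧' = 0 := by
    rw [hs1, Preadditive.sub_comp, ha, Category.assoc, ← Functor.map_comp, hb1, sub_self]
  have hs1p : s1 ≫ p⟦(1:ℤ)⟧' = w := by
    rw [hs1, Preadditive.sub_comp, ← hs, Category.assoc, hip, comp_zero, sub_zero]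
  obtain ⟨κ, hκ⟩ := ex_hf hX s1 hs1b
  obtain ⟨τ, hτ⟩ := ex_gh hT2 (κ ≫ ζ - 𝟙 E2) (by
    rw [Preadditive.sub_comp, Category.assoc, ← hζ2, ← Category.assoc, ← hκ, hs1p,
      Category.id_comp, sub_self])
  obtain ⟨ν, hν⟩ : ∃ ν : Y ⟶ Y, q ≫ κ = ν ≫ ω := by
    obtain ⟨y0, hy0⟩ := ex_fg1 hA' (q ≫ s1) (by rw [Category.assoc, hs1p, z_gh hT2])
    obtain ⟨ν0, hν0⟩ := ex_hf hT1 y0 (by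
      rw [← hb1, Functor.map_comp, ← Category.assoc, ← hy0, Category.assoc, hs1b, comp_zero])
    obtain ⟨β0, hβ0⟩ := ex_gh hX (q ≫ κ - ν0 ≫ ω) (by
      rw [Preadditive.sub_comp, Category.assoc, Category.assoc, ← hκ, ← hω2, hy0, hν0,
        Category.assoc, sub_self])
    refine ⟨ν0 + β0 ≫ g, ?_⟩
    rw [Preadditive.add_comp, Category.assoc, hω1, ← hβ0]; abel
  obtain ⟨ξ, hξ⟩ := ex_gh hT2 (ω ≫ ζ) (by
    rw [Category.assoc, ← hζ2, ← Category.assoc, ← hω2, Category.assoc, hip, comp_zero])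
  obtain ⟨ρ, hρ⟩ := ex_fg hT2 (𝟙 Y + q ≫ τ - ν ≫ ξ) (by
    rw [Preadditive.sub_comp, Preadditive.add_comp, Category.assoc, Category.assoc, ← hτ, ← hξ,
      ← Category.assoc ν, ← hν, Preadditive.comp_sub]
    simp)
  obtain ⟨β1, hβ1⟩ := ex_gh hX (j ≫ ω) (by
    rw [Category.assoc, ← hω2, ← Category.assoc]; exact z_hf hA')
  obtain ⟨j1, hj1⟩ := ex_fg hT2 (j ≫ ξ - β1 ≫ g) (by
    rw [Preadditive.sub_comp, Category.assoc, Category.assoc, ← hξ, ← Category.assoc j, hβ1,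
      Category.assoc, hζ1, sub_self])
  obtain ⟨g1, hg1⟩ := ex_fg hT2 (g ≫ ξ - g) (by
    rw [Preadditive.sub_comp, Category.assoc, ← hξ, ← Category.assoc, hω1, hζ1, sub_self])
  obtain ⟨β', hβ'⟩ : ∃ β' : X ⟶ Y, 𝟙 X = ζ ≫ κ + β' ≫ ω := by
    obtain ⟨a1, ha1⟩ := ex_fg1 hA' (h' - ζ ≫ s1) (by
      rw [Preadditive.sub_comp, Category.assoc, hs1p, hζ2, sub_self])
    obtain ⟨β, hβ⟩ := ex_hf hT1 a1 (by
      have : h' ≫ b⟦(1:ℤ)⟧' = 0 := z_hf hX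
      rw [← hb1, Functor.map_comp, ← Category.assoc, ← ha1, Preadditive.sub_comp, Category.assoc,
        hs1b, this, comp_zero, sub_zero])
    obtain ⟨β2, hβ2⟩ := ex_gh hX (𝟙 X - ζ ≫ κ - β ≫ ω) (by
      rw [Preadditive.sub_comp, Preadditive.sub_comp, Category.assoc, Category.assoc, ← hκ, ← hω2,
        Category.id_comp, ha1, hβ, Category.assoc, sub_self])
    refine ⟨β + β2 ≫ g, ?_⟩
    rw [Preadditive.add_comp, Category.assoc, hω1, ← hβ2]; abel
  -- the subspace
  let J : Submodule ℂ (Y ⟶ Y) :=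
    { carrier := {f | ∃ (a1 : Y ⟶ E1) (a2 : Y ⟶ B) (d : Y ⟶ L), f = a1 ≫ j + a2 ≫ g + d ≫ k}
      add_mem' := by
        rintro f f' ⟨a1, a2, d, rfl⟩ ⟨a1', a2', d', rfl⟩
        exact ⟨a1 + a1', a2 + a2', d + d', by simp only [Preadditive.add_comp]; abel⟩
      zero_mem' := ⟨0, 0, 0, by simp⟩
      smul_mem' := by
        rintro z f ⟨a1, a2, d, rfl⟩
        exact ⟨z • a1, z • a2, z • d, by simp only [Linear.smul_comp, smul_add]⟩ }
  have hJl : ∀ (c f : Y ⟶ Y), f ∈ J → c ≫ f ∈ J := by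
    rintro c f ⟨a1, a2, d, rfl⟩
    exact ⟨c ≫ a1, c ≫ a2, c ≫ d, by simp only [Preadditive.comp_add, Category.assoc]⟩
  have hJξ : ∀ f : Y ⟶ Y, f ∈ J → f ≫ ξ ∈ J := by
    rintro f ⟨a1, a2, d, rfl⟩
    obtain ⟨c, hc⟩ := hk2 ξ
    have e1 : j ≫ ξ = β1 ≫ g + j1 ≫ j := by rw [← hj1]; abel
    have e2 : g ≫ ξ = g + g1 ≫ j := by rw [← hg1]; abel
    refine ⟨a1 ≫ j1 + a2 ≫ g1, a1 ≫ β1 + a2, d ≫ c, ?_⟩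
    simp only [Preadditive.add_comp, Category.assoc, e1, e2, hc, Preadditive.comp_add]
    abel
  have hJ1 : 𝟙 Y - ν ≫ ξ ∈ J := by
    obtain ⟨c, hc⟩ := hk1 τ
    refine ⟨ρ, 0, - (q ≫ c), ?_⟩
    rw [← hρ, Preadditive.neg_comp, Category.assoc, ← hc, zero_comp]; abel
  let R0 : (Y ⟶ Y) →ₗ[ℂ] (Y ⟶ Y) := Linear.rightComp ℂ Y ξ
  let R : ((Y ⟶ Y) ⧸ J) →ₗ[ℂ] ((Y ⟶ Y) ⧸ J) := J.mapQ J R0 (fun f hf => hJξ f hf)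
  have hR : ∀ f : Y ⟶ Y, R (J.mkQ f) = J.mkQ (f ≫ ξ) := fun f => rfl
  have hRν : ∀ c : Y ⟶ Y, R (J.mkQ (c ≫ ν)) = J.mkQ c := by
    intro c
    rw [hR, ← sub_eq_zero, ← map_sub, Submodule.mkQ_apply, Submodule.Quotient.mk_eq_zero,
      ← Submodule.neg_mem_iff]
    have := hJl c _ hJ1
    convert this using 1
    simp
  have hsurj : Function.Surjective R := by
    intro x
    obtain ⟨c, rfl⟩ := J.mkQ_surjective x
    exact ⟨_, hRν c⟩
  have hinj : Function.Injective R := LinearMap.injective_iff_surjective.mpr hsurj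
  have h1 : J.mkQ (ξ ≫ ν) = J.mkQ (𝟙 Y) := hinj (by rw [hRν, hR, Category.id_comp])
  have h2 : 𝟙 Y - ξ ≫ ν ∈ J := by
    rw [← Submodule.Quotient.mk_eq_zero, ← Submodule.mkQ_apply, map_sub, h1, sub_self]
  obtain ⟨a1, a2, d, hd⟩ := h2
  have hω : ω = ξ ≫ q ≫ κ + (a1 ≫ β1 ≫ g ≫ q + a2 ≫ g ≫ q) ≫ κ' + d ≫ k ≫ ω := by
    have e1 : 𝟙 Y = ξ ≫ ν + (a1 ≫ j + a2 ≫ g + d ≫ k) := by rw [← hd]; abel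
    have e2 : ω = (ξ ≫ ν + (a1 ≫ j + a2 ≫ g + d ≫ k)) ≫ ω := by rw [← e1, Category.id_comp]
    have e3 : j ≫ ω = β1 ≫ g ≫ q ≫ κ' := by rw [hβ1, hκ']
    have e4 : g ≫ ω = g ≫ q ≫ κ' := by rw [hω1, hκ']
    calc ω = _ := e2
      _ = _ := by
        simp only [Preadditive.add_comp, Category.assoc, e3, e4, hν]
        abel
  refine ⟨⟨biprod.lift (ζ + β' ≫ ξ ≫ q) (biprod.lift (β' ≫ (a1 ≫ β1 ≫ g ≫ q + a2 ≫ g ≫ q))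
    (β' ≫ d)), biprod.desc κ (biprod.desc κ' (k ≫ ω)), ?_⟩⟩
  rw [biprod.lift_desc, biprod.lift_desc, hβ']
  nth_rewrite 2 [hω]
  simp only [Preadditive.add_comp, Preadditive.comp_add, Category.assoc]
  abel

end Aux

set_option linter.unusedSectionVars false
section Aux
variable {C}

theorem aux_retr {A B X D : C} {f : A ⟶ B} {g : B ⟶ X} {h : X ⟶ A⟦(1:ℤ)⟧}
    (hT : Triangle.mk f g h ∈ distTriang C) (b1 : B ⟶ D) (b2 : D ⟶ B)
    (h1 : f ≫ b1 ≫ b2 = f) (h2 : b1 ≫ b2 ≫ g = g) : Nonempty (Retract B D) := by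
  obtain ⟨x, hx⟩ := co_fg hT (b1 ≫ b2 - 𝟙 B) (by rw [Preadditive.comp_sub, h1]; simp)
  have h3 : (b1 ≫ b2 - 𝟙 B) ≫ (b1 ≫ b2 - 𝟙 B) = 0 := by
    nth_rewrite 2 [hx]
    rw [← Category.assoc, Preadditive.sub_comp, Category.assoc, h2, Category.id_comp, sub_self,
      zero_comp]
  refine ⟨⟨b1, b2 ≫ (𝟙 B - (b1 ≫ b2 - 𝟙 B)), ?_⟩⟩
  have h4 : b1 ≫ b2 = 𝟙 B + (b1 ≫ b2 - 𝟙 B) := by abel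
  rw [← Category.assoc]
  calc (b1 ≫ b2) ≫ (𝟙 B - (b1 ≫ b2 - 𝟙 B)) =
      (𝟙 B + (b1 ≫ b2 - 𝟙 B)) ≫ (𝟙 B - (b1 ≫ b2 - 𝟙 B)) := by rw [← h4]
    _ = 𝟙 B - (b1 ≫ b2 - 𝟙 B) ≫ (b1 ≫ b2 - 𝟙 B) := by
        simp only [Preadditive.add_comp, Preadditive.comp_sub, Category.id_comp, Category.comp_id]
        abel
    _ = 𝟙 B := by rw [h3, sub_zero]

theorem retr1 {A B S A0 : C} {f : A ⟶ B} {g : B ⟶ S} {h : S ⟶ A⟦(1:ℤ)⟧}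
    (hT : Triangle.mk f g h ∈ distTriang C) (ρ : Retract A A0) :
    ∃ (B0 : C) (f0 : A0 ⟶ B0) (g0 : B0 ⟶ S) (h0 : S ⟶ A0⟦(1:ℤ)⟧),
      Triangle.mk f0 g0 h0 ∈ distTriang C ∧ Nonempty (Retract B B0) := by
  obtain ⟨B0, f0, g0, hT0⟩ := distinguished_cocone_triangle₂ (h ≫ ρ.i⟦(1:ℤ)⟧')
  obtain ⟨b1, h11, h12⟩ := tr_b hT hT0 ρ.i (𝟙 S) (by simp)
  obtain ⟨b2, h21, h22⟩ := tr_b hT0 hT ρ.r (𝟙 S) (by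
    rw [Category.assoc, ← Functor.map_comp, ρ.retract]; simp)
  refine ⟨B0, f0, g0, _, hT0, aux_retr hT b1 b2 ?_ ?_⟩
  · rw [← Category.assoc, h11, Category.assoc, h21, ← Category.assoc, ρ.retract, Category.id_comp]
  · rw [← h22, ← Category.assoc, ← h12]; simp

theorem retr2 {A B X S : C} {f : A ⟶ B} {g : B ⟶ X} {h : X ⟶ A⟦(1:ℤ)⟧}
    (hT : Triangle.mk f g h ∈ distTriang C) (ρ : Retract X S) :
    ∃ (D : C) (f0 : A ⟶ D) (g0 : D ⟶ S) (h0 : S ⟶ A⟦(1:ℤ)⟧),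
      Triangle.mk f0 g0 h0 ∈ distTriang C ∧ Nonempty (Retract B D) := by
  obtain ⟨D, f0, g0, hT0⟩ := distinguished_cocone_triangle₂ (ρ.r ≫ h)
  obtain ⟨b1, h11, h12⟩ := tr_b hT hT0 (𝟙 A) ρ.i (by
    rw [← Category.assoc, ρ.retract]; simp)
  obtain ⟨b2, h21, h22⟩ := tr_b hT0 hT (𝟙 A) ρ.r (by simp)
  refine ⟨D, f0, g0, _, hT0, aux_retr hT b1 b2 ?_ ?_⟩
  · rw [← Category.assoc, h11, Category.assoc, h21]; simp
  · rw [← h22, ← Category.assoc, ← h12, Category.assoc, ρ.retract, Category.comp_id]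

/-- `F` is a retract of a tower of weight at most `r`. -/
def Rb (G : C) (t : ℝ) (F : C) (r : ℝ) : Prop :=
  ∃ (B0 : C) (r' : ℝ), r' ≤ r ∧ BuildVal C G t B0 r' ∧ Nonempty (Retract F B0)

theorem Rb.retract {G : C} {t : ℝ} {F F' : C} {r : ℝ} (h : Rb G t F r) (ρ : Retract F' F) :
    Rb G t F' r := by
  obtain ⟨B0, r', hr, hB, ⟨ρ'⟩⟩ := h
  exact ⟨B0, r', hr, hB, ⟨ρ.trans ρ'⟩⟩

def Att (G : C) (t : ℝ) (S : C) (c : ℝ) : Prop :=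
  ∀ (A B : C) (f : A ⟶ B) (g : B ⟶ S) (h : S ⟶ A⟦(1:ℤ)⟧), Triangle.mk f g h ∈ distTriang C →
    ∀ r, Rb G t A r → Rb G t B (r + c)

theorem Att.mono {G : C} {t : ℝ} {S : C} {c c' : ℝ} (h : Att G t S c) (hc : c ≤ c') :
    Att G t S c' := by
  intro A B f g hh hT r hr
  obtain ⟨B0, r', hr, hB, ρ⟩ := h A B f g hh hT r hr
  exact ⟨B0, r', by linarith, hB, ρ⟩

theorem Att.retract {G : C} {t : ℝ} {S S' : C} {c : ℝ} (h : Att G t S' c) (ρ : Retract S S') :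
    Att G t S c := by
  intro A B f g hh hT r hr
  obtain ⟨D, f0, g0, h0, hT0, ⟨ρ'⟩⟩ := retr2 hT ρ
  exact (h _ _ _ _ _ hT0 r hr).retract ρ'

theorem Att.base (G : C) (t : ℝ) (m : ℤ) : Att G t (G⟦m⟧) (Real.exp (m * t)) := by
  intro A B f g hh hT r hr
  obtain ⟨A0, r', hr, hB, ⟨ρ⟩⟩ := hr
  obtain ⟨B0, f0, g0, h0, hT0, ρ'⟩ := retr1 hT ρ
  exact ⟨B0, r' + Real.exp (m * t), by linarith, BuildVal.step _ _ _ _ _ _ _ hT0 hB, ρ'⟩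

theorem Att.zero (G : C) (t : ℝ) {S : C} (hS : IsZero S) : Att G t S 0 := by
  intro A B f g hh hT r hr
  obtain ⟨z, hz⟩ := ex_fg hT (𝟙 B) (hS.eq_of_tgt _ _)
  rw [add_zero]
  exact hr.retract ⟨z, f, hz.symm⟩

theorem Att.biprod {G : C} {t : ℝ} {S S' : C} {c c' : ℝ} (h : Att G t S c) (h' : Att G t S' c') :
    Att G t (S ⊞ S') (c + c') := by
  intro A B f g hh hT r hr
  obtain ⟨A', X, i, p, y', b, g', h2, hT1, hT2, ⟨ρ⟩⟩ := aux_split hT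
    (binaryBiproductTriangle_distinguished S S') biprod.inr biprod.fst (by simp)
      (by rw [add_comm]; exact biprod.total)
  rw [← add_assoc]
  exact (h'.retract ρ) _ _ _ _ _ hT2 _ (h _ _ _ _ _ hT1 _ hr)

theorem Att.gen {G : C} {t : ℝ} {Y E1 E2 L : C} {j : E1 ⟶ Y} {q : Y ⟶ E2} {w : E2 ⟶ E1⟦(1:ℤ)⟧}
    (hT2 : Triangle.mk j q w ∈ distTriang C) (k : L ⟶ Y) (hk1 : ∀ f : E2 ⟶ Y, ∃ c, f = c ≫ k)
    (hk2 : ∀ f : Y ⟶ Y, ∃ c, k ≫ f = c ≫ k) {c1 c2 c3 : ℝ} (h1 : Att G t E1 c1)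
    (h2 : Att G t E2 c2) (h3 : Att G t L c3) : Att G t Y (c1 + (c2 + (c2 + c3))) := by
  intro A B f g hh hT r hr
  obtain ⟨A', X, i, p, y', b, g', h', hT1, hT2, ⟨ρ⟩⟩ := aux_gen hT hT2 k hk1 hk2
  rw [← add_assoc]
  exact ((h2.biprod (h2.biprod h3)).retract ρ) _ _ _ _ _ hT2 _ (h1 _ _ _ _ _ hT1 _ hr)

theorem retract_biproduct {k : ℕ} {X : C} (S : Fin k → C) (a : ∀ i, X ⟶ S i) (c : ∀ i, S i ⟶ X)
    (h : ∑ i, a i ≫ c i = 𝟙 X) : Nonempty (Retract X (biproduct S)) :=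
  ⟨⟨biproduct.lift a, biproduct.desc c, by rw [biproduct.lift_desc, h]⟩⟩

theorem Att.biproduct {G : C} {t : ℝ} : ∀ {k : ℕ} (S : Fin k → C) (c : Fin k → ℝ)
    (_ : ∀ i, Att G t (S i) (c i)), Att G t (biproduct S) (∑ i, c i)
  | 0, S, c, h => by
    rw [Finset.univ_eq_empty, Finset.sum_empty]
    refine Att.zero G t ?_
    rw [IsZero.iff_id_eq_zero, ← biproduct.total]
    simp
  | k+1, S, c, h => by
    rw [Fin.sum_univ_succ]
    have h1 := Att.biproduct (fun i => S i.succ) (fun i => c i.succ) (fun i => h _)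
    refine ((h 0).biprod h1).retract ⟨biprod.lift (biproduct.π S 0)
      (biproduct.lift (fun i => biproduct.π S i.succ)), biprod.desc (biproduct.ι S 0)
      (biproduct.desc (fun i => biproduct.ι S i.succ)), ?_⟩
    rw [biprod.lift_desc, biproduct.lift_desc, ← biproduct.total, Fin.sum_univ_succ]

/-- existence of a universal map from copies of `E2`. -/
theorem exists_univ_map (E2 Y : C) : ∃ (N : ℕ) (k : biproduct (fun _ : Fin N => E2) ⟶ Y),
    N = Module.finrank ℂ (E2 ⟶ Y) ∧
    (∀ f : E2 ⟶ Y, ∃ c, f = c ≫ k) ∧ (∀ f : Y ⟶ Y, ∃ c, k ≫ f = c ≫ k) := by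
  let b := Module.finBasis ℂ (E2 ⟶ Y)
  have h1 : ∀ f : E2 ⟶ Y, ∃ c, f = c ≫ biproduct.desc (fun i => b i) := by
    intro f
    refine ⟨biproduct.lift (fun i => b.repr f i • 𝟙 E2), ?_⟩
    rw [biproduct.lift_desc]
    conv_lhs => rw [← b.sum_repr f]
    simp
  refine ⟨_, biproduct.desc (fun i => b i), rfl, h1, fun f => ?_⟩
  choose c hc using fun i => h1 (b i ≫ f)
  refine ⟨biproduct.desc c, ?_⟩
  ext i
  simp [← hc]

theorem shift_dist {A B X : C} {f : A ⟶ B} {g : B ⟶ X} {h : X ⟶ A⟦(1:ℤ)⟧}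
    (hT : Triangle.mk f g h ∈ distTriang C) (n : ℤ) :
    ∃ (f' : A⟦n⟧ ⟶ B⟦n⟧) (g' : B⟦n⟧ ⟶ X⟦n⟧) (h' : X⟦n⟧ ⟶ A⟦n⟧⟦(1:ℤ)⟧),
      Triangle.mk f' g' h' ∈ distTriang C :=
  ⟨_, _, _, Triangle.shift_distinguished _ hT n⟩

theorem att_tower {G : C} {t : ℝ} {Y : C} {ρ : ℝ} (h : BuildVal C G 0 Y ρ) :
    ∃ c : ℝ, 0 ≤ c ∧ ∀ n : ℤ, Att G t (Y⟦n⟧) (c * Real.exp (n * t)) := by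
  induction h with
  | zero Z hZ =>
    refine ⟨0, le_rfl, fun n => ?_⟩
    rw [zero_mul]
    exact Att.zero G t ((shiftFunctor C n).map_isZero hZ)
  | step A B m r f g h hT hA ih =>
    obtain ⟨c, hc, ih⟩ := ih
    obtain ⟨N, k, -, hk1, hk2⟩ := exists_univ_map (G⟦m⟧) B
    refine ⟨c + (Real.exp (m * t) + (Real.exp (m * t) + N * Real.exp (m * t))), by positivity,
      fun n => ?_⟩
    have hG : Att G t ((G⟦m⟧)⟦n⟧) (Real.exp (m * t) * Real.exp (n * t)) := by
      have := (Att.base G t (m + n)).retract (Retract.ofIso ((shiftFunctorAdd C m n).app G).symm)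
      rw [← Real.exp_add, ← add_mul]
      exact_mod_cast this
    have hL : Att G t ((biproduct (fun _ : Fin N => G⟦m⟧))⟦n⟧)
        (N * (Real.exp (m * t) * Real.exp (n * t))) := by
      have h1 := Att.biproduct (fun _ : Fin N => (G⟦m⟧)⟦n⟧)
        (fun _ => Real.exp (m * t) * Real.exp (n * t)) (fun _ => hG)
      rw [Finset.sum_const, Finset.card_univ, Fintype.card_fin, nsmul_eq_mul] at h1
      obtain ⟨ρ⟩ := retract_biproduct (X := (biproduct (fun _ : Fin N => G⟦m⟧))⟦n⟧)
        (fun _ : Fin N => (G⟦m⟧)⟦n⟧)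
        (fun i => (biproduct.π (fun _ : Fin N => G⟦m⟧) i)⟦n⟧')
        (fun i => (biproduct.ι (fun _ : Fin N => G⟦m⟧) i)⟦n⟧') (by
          simp_rw [← Functor.map_comp]
          rw [← Functor.map_sum, biproduct.total, CategoryTheory.Functor.map_id])
      exact h1.retract ρ
    obtain ⟨f', g', h', hTn⟩ := shift_dist hT n
    have := Att.gen (G := G) (t := t) hTn (k⟦n⟧') (by
        intro f'
        obtain ⟨f0, rfl⟩ := (shiftFunctor C n).map_surjective f'
        obtain ⟨c, hc⟩ := hk1 f0
        exact ⟨c⟦n⟧', by rw [hc, Functor.map_comp]⟩) (by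
        intro f'
        obtain ⟨f0, rfl⟩ := (shiftFunctor C n).map_surjective f'
        obtain ⟨c, hc⟩ := hk2 f0
        exact ⟨c⟦n⟧', by rw [← Functor.map_comp, hc, Functor.map_comp]⟩) (ih n) hG hL
    refine this.mono (le_of_eq ?_)
    ring

theorem att_shift {G : C} (hG : IsSplitGenerator C G) (t : ℝ) (E : C) :
    ∃ c : ℝ, 0 ≤ c ∧ ∀ n : ℤ, Att G t (E⟦n⟧) (c * Real.exp (n * t)) := by
  obtain ⟨ρ, B, F', hB, ⟨e⟩⟩ := hG E
  obtain ⟨c, hc, h⟩ := att_tower (t := t) hB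
  refine ⟨c, hc, fun n => (h n).retract ?_⟩
  exact Retract.map ⟨biprod.inl ≫ e.inv, e.hom ≫ biprod.fst, by simp⟩ (shiftFunctor C n)

end Aux

set_option linter.unusedSectionVars false

section Aux
variable {C}

theorem finrank_le_of_surj {V V' : Type*} [AddCommGroup V] [Module ℂ V] [AddCommGroup V']
    [Module ℂ V'] [Module.Finite ℂ V] [Module.Finite ℂ V'] (φ : V →+ V')
    (hφ : Function.Surjective φ) (hz : ∀ (z : ℂ) (f : V), ∃ z' : ℂ, φ (z • f) = z' • φ f) :
    Module.finrank ℂ V' ≤ Module.finrank ℂ V := by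
  let b := Module.finBasis ℂ V
  have hspan : Submodule.span ℂ (Set.range (fun i => φ (b i))) = ⊤ := by
    rw [eq_top_iff]
    rintro x -
    obtain ⟨f, rfl⟩ := hφ x
    rw [← b.sum_repr f, map_sum]
    refine Submodule.sum_mem _ (fun i _ => ?_)
    obtain ⟨z', hz'⟩ := hz (b.repr f i) (b i)
    rw [hz']
    exact Submodule.smul_mem _ _ (Submodule.subset_span ⟨i, rfl⟩)
  have := finrank_range_le_card (R := ℂ) (fun i => φ (b i))
  rw [Set.finrank, hspan, finrank_top, Fintype.card_fin] at this
  exact this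

/-- every endomorphism of `E` is a scalar. -/
def Scal (E : C) : Prop := ∀ f : E ⟶ E, ∃ z : ℂ, f = z • 𝟙 E

theorem finrank_functor (Φ : C ⥤ C) [Φ.Additive] [Φ.Full] {E X E' X' : C} (hE : Scal E')
    (α : E' ≅ Φ.obj E) (β : Φ.obj X ≅ X') :
    Module.finrank ℂ (E' ⟶ X') ≤ Module.finrank ℂ (E ⟶ X) := by
  refine finrank_le_of_surj
    (AddMonoidHom.mk' (fun f : E ⟶ X => α.hom ≫ Φ.map f ≫ β.hom) (fun f g => by simp)) ?_ ?_
  · intro x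
    obtain ⟨f, hf⟩ := Φ.map_surjective (α.inv ≫ x ≫ β.inv)
    exact ⟨f, by simp [hf]⟩
  · intro z f
    obtain ⟨z', hz'⟩ := hE (α.hom ≫ Φ.map (z • 𝟙 E) ≫ α.inv)
    refine ⟨z', ?_⟩
    have h1 : z • f = (z • 𝟙 E) ≫ f := by simp
    have h2 : α.hom ≫ Φ.map (z • 𝟙 E) = z' • α.hom := by
      rw [← cancel_mono α.inv]; simp [hz']
    simp only [AddMonoidHom.mk'_apply]
    rw [h1, Φ.map_comp, Category.assoc, ← Category.assoc α.hom, h2]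
    simp

theorem scal_of_functor (Φ : C ⥤ C) [Φ.Additive] [Φ.Full] {E E' : C} (hE : Scal E)
    (α : E' ≅ Φ.obj E) : Scal E' := by
  by_cases h0 : 𝟙 E' = 0
  · intro f
    exact ⟨0, by rw [← Category.id_comp f, h0]; simp⟩
  have key : ∀ f : E' ⟶ E', IsIso f ↔ f ≠ 0 := by
    intro f
    constructor
    · intro hf h
      apply h0
      obtain ⟨g, hg, -⟩ := hf.out
      rw [← hg, h, zero_comp]
    · intro hf
      obtain ⟨g, hg⟩ := Φ.map_surjective (α.inv ≫ f ≫ α.hom)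
      obtain ⟨z, hz⟩ := hE g
      have hz0 : z ≠ 0 := by
        rintro rfl
        apply hf
        rw [hz, zero_smul, Φ.map_zero] at hg
        rw [← cancel_mono α.hom, ← cancel_epi α.inv, ← hg]; simp
      have : IsIso g := by
        rw [hz]
        exact ⟨z⁻¹ • 𝟙 E, by simp [smul_smul, hz0], by simp [smul_smul, hz0]⟩
      have hf' : f = α.hom ≫ Φ.map g ≫ α.inv := by rw [hg]; simp
      rw [hf']
      infer_instance
  have h1 := finrank_endomorphism_eq_one ℂ key
  intro f
  obtain ⟨c, hc⟩ := (finrank_eq_one_iff_of_nonzero' (𝟙 E') h0).mp h1 f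
  exact ⟨c, hc.symm⟩

theorem finrank_retract_le {X X' Y Y' : C} (ρ : Retract X X') (ρ' : Retract Y Y') :
    Module.finrank ℂ (X ⟶ Y) ≤ Module.finrank ℂ (X' ⟶ Y') := by
  let L : (X ⟶ Y) →ₗ[ℂ] (X' ⟶ Y') :=
    { toFun := fun f => ρ.r ≫ f ≫ ρ'.i
      map_add' := by intros; simp
      map_smul' := by intros; simp }
  refine LinearMap.finrank_le_finrank_of_injective (f := L) ?_
  intro f g hfg
  have : ρ.r ≫ f ≫ ρ'.i = ρ.r ≫ g ≫ ρ'.i := hfg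
  have h2 := congrArg (fun x => ρ.i ≫ x ≫ ρ'.r) this
  simpa using h2

theorem finrank_dist_le {A B X : C} {f : A ⟶ B} {g : B ⟶ X} {h : X ⟶ A⟦(1:ℤ)⟧}
    (hT : Triangle.mk f g h ∈ distTriang C) (W : C) :
    Module.finrank ℂ (W ⟶ B) ≤ Module.finrank ℂ (W ⟶ A) + Module.finrank ℂ (W ⟶ X) := by
  have h1 := LinearMap.finrank_range_add_finrank_ker (Linear.rightComp ℂ W g)
  have h2 : Module.finrank ℂ (LinearMap.range (Linear.rightComp ℂ W g)) ≤
    Module.finrank ℂ (W ⟶ X) := Submodule.finrank_le _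
  have h3 : LinearMap.ker (Linear.rightComp ℂ W g) ≤ LinearMap.range (Linear.rightComp ℂ W f) := by
    intro x hx
    obtain ⟨z, hz⟩ := ex_fg hT x hx
    exact ⟨z, hz.symm⟩
  have h4 := Submodule.finrank_mono h3
  have h5 := LinearMap.finrank_range_le (Linear.rightComp ℂ W f)
  omega

theorem finrank_biproduct_le {k l : ℕ} (S : Fin k → C) (S' : Fin l → C)
    (h : ∀ i j, Module.finrank ℂ (S i ⟶ S' j) ≤ 1) :
    Module.finrank ℂ (biproduct S ⟶ biproduct S') ≤ k * l := by
  let L : (biproduct S ⟶ biproduct S') →ₗ[ℂ] (∀ p : Fin k × Fin l, S p.1 ⟶ S' p.2) :=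
    { toFun := fun f p => biproduct.ι S p.1 ≫ f ≫ biproduct.π S' p.2
      map_add' := by intros; ext; simp
      map_smul' := by intros; ext; simp }
  have hL : Function.Injective L := by
    intro f g hfg
    ext i j
    have := congrFun hfg (j, i)
    simpa [L] using this
  refine (LinearMap.finrank_le_finrank_of_injective hL).trans ?_
  rw [Module.finrank_pi_fintype]
  refine (Finset.sum_le_sum (fun p _ => h p.1 p.2)).trans ?_
  simp

theorem PdObject.scal {d : ℕ} (p : PdObject C d) : Scal p.E := by
  have h0 : 𝟙 p.E ≠ 0 := fun h => p.nonzero ((IsZero.iff_id_eq_zero _).mpr h)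
  have h1 := p.hom_rank_one 0 (Nat.zero_le _)
  have h2 : Module.finrank ℂ (p.E ⟶ p.E) ≤ 1 := by
    rw [← h1]
    have e : p.E ≅ (shiftFunctor C (2 * ((0 : ℕ) : ℤ))).obj p.E :=
      (shiftFunctorZero' C (2 * ((0 : ℕ) : ℤ)) (by simp)).symm.app p.E
    exact finrank_retract_le (Retract.refl _) (Retract.ofIso e)
  have h3 : Module.finrank ℂ (p.E ⟶ p.E) = 1 := by
    refine le_antisymm h2 ?_
    have : Nontrivial (p.E ⟶ p.E) := ⟨⟨_, _, h0⟩⟩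
    exact Module.finrank_pos
  intro f
  obtain ⟨c, hc⟩ := (finrank_eq_one_iff_of_nonzero' (𝟙 p.E) h0).mp h3 f
  exact ⟨c, hc.symm⟩

theorem PdObject.finrank_le_one {d : ℕ} (p : PdObject C d) (n : ℤ) :
    Module.finrank ℂ (p.E ⟶ p.E⟦n⟧) ≤ 1 := by
  by_cases h : ∃ k : ℕ, k ≤ d ∧ n = 2 * (k : ℤ)
  · obtain ⟨k, hk, rfl⟩ := h
    exact (p.hom_rank_one k hk).le
  · have h1 := p.hom_rank_zero n h
    have : Subsingleton (p.E ⟶ p.E⟦n⟧) := ⟨fun a b => by rw [h1 a, h1 b]⟩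
    rw [Module.finrank_zero_of_subsingleton]; omega

theorem PdObject.finrank_shift_le_one {d : ℕ} (p : PdObject C d) (a b : ℤ) :
    Module.finrank ℂ (p.E⟦a⟧ ⟶ p.E⟦b⟧) ≤ 1 := by
  refine le_trans ?_ (p.finrank_le_one (b - a))
  exact finrank_functor (shiftFunctor C a) (scal_of_functor (shiftFunctor C a) p.scal (Iso.refl _))
    (Iso.refl _) ((shiftFunctorAdd' C (b - a) a b (by ring)).symm.app p.E)

instance PdTwist.additive {d : ℕ} (tw : PdTwist C d) : tw.P.functor.Additive :=
  Functor.additive_of_preserves_binary_products _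

theorem PdTwist.finrank_step {d : ℕ} (tw : PdTwist C d) (k : ℤ)
    (e : tw.P.functor.obj tw.E ≅ tw.E⟦k⟧) (F : C) (m : ℤ) :
    Module.finrank ℂ (tw.E ⟶ (tw.P.functor.obj F)⟦m⟧) ≤
      Module.finrank ℂ (tw.E ⟶ F⟦m + k⟧) := by
  let _ := tw.commShift
  refine finrank_functor (tw.P.functor ⋙ shiftFunctor C (-k)) tw.scal ?_ ?_
  · exact (shiftFunctorCompIsoId C k (-k) (by ring)).symm.app tw.E ≪≫
      (shiftFunctor C (-k)).mapIso e.symm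
  · exact (shiftFunctor C (-k)).mapIso ((tw.P.functor.commShiftIso (m + k)).app F) ≪≫
      (shiftFunctorAdd' C (m + k) (-k) m (by ring)).symm.app _

end Aux

set_option linter.unusedSectionVars false

section Aux
variable {C}

theorem retr_shift_biproduct {E X : C} {k : ℕ} (ns : Fin k → ℤ)
    (e : X ≅ biproduct (fun i => E⟦ns i⟧)) (n : ℤ) :
    Nonempty (Retract (X⟦n⟧) (biproduct (fun i => E⟦ns i + n⟧))) := by
  refine retract_biproduct _
    (fun i => (e.hom ≫ biproduct.π (fun i => E⟦ns i⟧) i)⟦n⟧' ≫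
      (shiftFunctorAdd C (ns i) n).inv.app E)
    (fun i => (shiftFunctorAdd C (ns i) n).hom.app E ≫
      (biproduct.ι (fun i => E⟦ns i⟧) i ≫ e.inv)⟦n⟧') ?_
  have : ∀ i, ((e.hom ≫ biproduct.π (fun i => E⟦ns i⟧) i)⟦n⟧' ≫
      (shiftFunctorAdd C (ns i) n).inv.app E) ≫ ((shiftFunctorAdd C (ns i) n).hom.app E ≫
      (biproduct.ι (fun i => E⟦ns i⟧) i ≫ e.inv)⟦n⟧') =
      (e.hom ≫ (biproduct.π (fun i => E⟦ns i⟧) i ≫ biproduct.ι (fun i => E⟦ns i⟧) i) ≫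
        e.inv)⟦n⟧' := by
    intro i
    simp
  rw [Finset.sum_congr rfl (fun i _ => this i), ← Functor.map_sum, ← Preadditive.comp_sum,
    ← Preadditive.sum_comp, biproduct.total]
  simp

theorem att_biproduct_shift {G E : C} {t c : ℝ} (hc : ∀ n : ℤ, Att G t (E⟦n⟧) (c * Real.exp (n * t)))
    {k : ℕ} (ns : Fin k → ℤ) (n : ℤ) :
    Att G t (biproduct (fun i => E⟦ns i + n⟧))
      (c * Real.exp (n * t) * ∑ i, Real.exp (ns i * t)) := by
  refine (Att.biproduct _ _ (fun i => hc (ns i + n))).mono (le_of_eq ?_)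
  rw [Finset.mul_sum]
  refine Finset.sum_congr rfl (fun i _ => ?_)
  push_cast
  rw [add_mul, Real.exp_add]
  ring

theorem PdTwist.att_T {d : ℕ} (tw : PdTwist C d) {G : C} {t c : ℝ} (hc0 : 0 ≤ c)
    (hc : ∀ n : ℤ, Att G t (tw.E⟦n⟧) (c * Real.exp (n * t))) (F : C)
    {k : ℕ} (ns : Fin k → ℤ) (e : tw.H F ≅ biproduct (fun i => tw.E⟦ns i⟧)) :
    Att G t ((tw.T F)⟦(1:ℤ)⟧)
      (c * (Real.exp t + 2 + 2 * (k * k)) * ∑ i, Real.exp (ns i * t)) := by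
  have h1 : Triangle.mk (tw.ι F) (tw.π F) (-(tw.θ F)⟦(1:ℤ)⟧') ∈ distTriang C :=
    rot_of_distTriang _ (tw.innerTri F)
  obtain ⟨j, q, w, hT⟩ := shift_dist h1 1
  obtain ⟨ρ1⟩ := retr_shift_biproduct ns e 1
  have e2 : (((tw.H F)⟦(-2:ℤ)⟧)⟦(1:ℤ)⟧)⟦(1:ℤ)⟧ ≅ (tw.H F)⟦(0:ℤ)⟧ :=
    (shiftFunctor C (1:ℤ)).mapIso ((shiftFunctorAdd' C (-2) 1 (-1) (by norm_num)).symm.app _) ≪≫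
      (shiftFunctorAdd' C (-1) 1 0 (by norm_num)).symm.app _
  obtain ⟨ρ2'⟩ := retr_shift_biproduct ns e 0
  have ρ2 := (Retract.ofIso e2).trans ρ2'
  have a1 := (att_biproduct_shift hc ns 1).retract ρ1
  have a2 := (att_biproduct_shift hc ns 0).retract ρ2
  obtain ⟨N, u, hN, hk1, hk2⟩ := exists_univ_map ((((tw.H F)⟦(-2:ℤ)⟧)⟦(1:ℤ)⟧)⟦(1:ℤ)⟧)
    ((tw.T F)⟦(1:ℤ)⟧)
  have a3 := Att.biproduct _ _ (fun _ : Fin N => a2)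
  have hN2 : N ≤ k * k + k * k := by
    rw [hN]
    refine (finrank_dist_le hT _).trans (Nat.add_le_add ?_ ?_)
    · exact (finrank_retract_le ρ2 ρ1).trans
        (finrank_biproduct_le _ _ (fun i j => tw.finrank_shift_le_one _ _))
    · exact (finrank_retract_le ρ2 ρ2).trans
        (finrank_biproduct_le _ _ (fun i j => tw.finrank_shift_le_one _ _))
  refine (Att.gen hT u hk1 hk2 a1 a2 a3).mono ?_
  rw [Finset.sum_const, Finset.card_univ, Fintype.card_fin, nsmul_eq_mul]
  have hN3 : (N : ℝ) ≤ k * k + k * k := by exact_mod_cast hN2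
  have hS : 0 ≤ ∑ i, Real.exp (ns i * t) := Finset.sum_nonneg (fun i _ => (Real.exp_pos _).le)
  generalize (∑ i, Real.exp (ns i * t)) = S at hS ⊢
  simp only [Int.cast_one, one_mul, Int.cast_zero, zero_mul, Real.exp_zero, mul_one]
  have := mul_le_mul_of_nonneg_right hN3 (mul_nonneg hc0 hS)
  nlinarith

theorem PdTwist.rb_step {d : ℕ} (tw : PdTwist C d) {G : C} {t c : ℝ} (hc0 : 0 ≤ c)
    (hc : ∀ n : ℤ, Att G t (tw.E⟦n⟧) (c * Real.exp (n * t))) (F : C)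
    {k : ℕ} (ns : Fin k → ℤ) (e : tw.H F ≅ biproduct (fun i => tw.E⟦ns i⟧)) {r : ℝ}
    (hr : Rb G t F r) :
    Rb G t (tw.P.functor.obj F)
      (r + c * (Real.exp t + 2 + 2 * (k * k)) * ∑ i, Real.exp (ns i * t)) := by
  have h1 : Triangle.mk (tw.η F) (tw.dl F) (-(tw.ev F)⟦(1:ℤ)⟧') ∈ distTriang C :=
    rot_of_distTriang _ (tw.outerTri F)
  exact tw.att_T hc0 hc F ns e _ _ _ _ _ h1 _ hr

theorem count_map_fin {k : ℕ} (ns : Fin k → ℤ) (s : ℤ) :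
    Multiset.count s (Multiset.map ns Finset.univ.val) =
      (Finset.univ.filter fun i => ns i = s).card := by
  rw [Multiset.count_map, Finset.card_def, Finset.filter_val]
  simp only [eq_comm]

theorem ns_compare {k k' : ℕ} (ns : Fin k → ℤ) (ns' : Fin k' → ℤ) (m : ℤ) {t : ℝ}
    (h : ∀ s : ℤ, (Finset.univ.filter fun i => ns' i = s).card ≤
      (Finset.univ.filter fun i => ns i = s - m).card) (hm : m ≤ 0) (ht : 0 < t) :
    k' ≤ k ∧ ∑ i, Real.exp (ns' i * t) ≤ ∑ i, Real.exp (ns i * t) := by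
  have hle : Multiset.map ns' Finset.univ.val ≤ Multiset.map (fun i => ns i + m) Finset.univ.val := by
    rw [Multiset.le_iff_count]
    intro s
    rw [count_map_fin, count_map_fin]
    refine (h s).trans (le_of_eq ?_)
    congr 1
    ext i
    simp only [Finset.mem_filter, Finset.mem_univ, true_and]
    omega
  obtain ⟨R, hR⟩ := Multiset.le_iff_exists_add.mp hle
  constructor
  · simpa using Multiset.card_le_card hle
  · have h1 := congrArg (fun M => (Multiset.map (fun z : ℤ => Real.exp (z * t)) M).sum) hR
    simp only [Multiset.map_map, Multiset.map_add, Multiset.sum_add, Function.comp_def] at h1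
    have h2 : 0 ≤ (Multiset.map (fun z : ℤ => Real.exp (z * t)) R).sum := by
      refine Multiset.sum_nonneg ?_
      intro x hx
      obtain ⟨z, -, rfl⟩ := Multiset.mem_map.mp hx
      exact (Real.exp_pos _).le
    have h3 : ∑ i, Real.exp (((ns i + m : ℤ) : ℝ) * t) ≤ ∑ i, Real.exp (ns i * t) := by
      refine Finset.sum_le_sum (fun i _ => Real.exp_le_exp.mpr ?_)
      have : ((ns i + m : ℤ) : ℝ) ≤ ns i := by exact_mod_cast (by omega)
      exact mul_le_mul_of_nonneg_right this ht.le
    have h4 : ∑ i, Real.exp (((ns i + m : ℤ) : ℝ) * t) = ∑ i, Real.exp (ns' i * t) +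
      (Multiset.map (fun z : ℤ => Real.exp (z * t)) R).sum := h1
    linarith

open ZeroObject in
theorem rb_self (G : C) (t : ℝ) : Rb G t G 1 := by
  have h := Att.base G t 0
  have hz : Rb G t (0 : C) 0 :=
    ⟨0, 0, le_rfl, BuildVal.zero _ (isZero_zero C), ⟨Retract.refl _⟩⟩
  have h2 := (h.retract (Retract.ofIso ((shiftFunctorZero C ℤ).symm.app G))) _ _ _ _ _
    (contractible_distinguished₁ G) 0 hz
  simpa using h2

theorem BuildVal.nonneg {G : C} {t : ℝ} {B : C} {r : ℝ} (h : BuildVal C G t B r) : 0 ≤ r := by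
  induction h with
  | zero Z hZ => exact le_rfl
  | step A B n r f g h hT hA ih => positivity

theorem retract_biprod {F B : C} (ρ : Retract F B) : ∃ F' : C, Nonempty (B ≅ F ⊞ F') := by
  obtain ⟨Z, g, h, hT⟩ := distinguished_cocone_triangle ρ.i
  have h0 : h = 0 := by
    have h1 : h ≫ ρ.i⟦(1:ℤ)⟧' = 0 := z_hf hT
    have h2 := congrArg (fun x => x ≫ ρ.r⟦(1:ℤ)⟧') h1
    simpa [← Functor.map_comp] using h2
  obtain ⟨e, -⟩ := exists_iso_binaryBiproduct_of_distTriang _ hT h0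
  exact ⟨Z, ⟨e⟩⟩

theorem complexity_le {G F : C} {t r : ℝ} (h : Rb G t F r) : complexity C G F t ≤ r := by
  obtain ⟨B, r', hr, hB, ⟨ρ⟩⟩ := h
  obtain ⟨F', e⟩ := retract_biprod ρ
  have hbdd : BddBelow (complexitySet C G F t) := ⟨0, by
    rintro x ⟨_, _, h, _⟩
    exact h.nonneg⟩
  have hmem : r' ∈ complexitySet C G F t := ⟨B, F', hB, e⟩
  exact (csInf_le hbdd hmem).trans hr

theorem complexity_nonneg (G F : C) (t : ℝ) : 0 ≤ complexity C G F t :=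
  Real.sInf_nonneg (fun _ ⟨_, _, h, _⟩ => h.nonneg)

theorem limsup_bound (a : ℕ → ℝ) (K : ℝ) (hK : 0 ≤ K) (h0 : ∀ n, 0 ≤ a n)
    (h : ∀ n : ℕ, a n ≤ 1 + K * n) :
    atTop.limsup (fun n : ℕ => ((Real.log (a n) / n : ℝ) : EReal)) ≤ (0 : EReal) := by
  have h1 : ∀ n : ℕ, Real.log (a n) ≤ Real.log (1 + K * n) := by
    intro n
    have h2 : (0:ℝ) ≤ K * n := by positivity
    rcases (h0 n).eq_or_lt with h3 | h3
    · rw [← h3, Real.log_zero]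
      exact Real.log_nonneg (by linarith)
    · exact Real.log_le_log h3 (h n)
  have h2 : Tendsto (fun n : ℕ => Real.log (1 + K * n) / n) atTop (nhds 0) := by
    rcases hK.eq_or_lt with h3 | h3
    · simp [← h3]
    have t1 : Tendsto (fun x : ℝ => Real.log x ^ 1 / ((1/K) * x + (-(1/K)))) atTop (nhds 0) :=
      Real.tendsto_pow_log_div_mul_add_atTop (1/K) (-(1/K)) 1 (by positivity)
    have t2 : Tendsto (fun n : ℕ => 1 + K * (n:ℝ)) atTop atTop :=
      tendsto_atTop_add_const_left _ _ (tendsto_natCast_atTop_atTop.const_mul_atTop h3)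
    refine (t1.comp t2).congr (fun n => ?_)
    simp only [Function.comp, pow_one]
    congr 1
    field_simp
    ring
  have h3 : Tendsto (fun n : ℕ => ((Real.log (1 + K * n) / n : ℝ) : EReal)) atTop
      (nhds ((0:ℝ) : EReal)) := (continuous_coe_real_ereal.tendsto 0).comp h2
  rw [← EReal.coe_zero, ← h3.limsup_eq]
  refine limsup_le_limsup ?_
  refine Eventually.of_forall (fun n => ?_)
  refine EReal.coe_le_coe_iff.mpr ?_
  exact div_le_div_of_nonneg_right (h1 n) (Nat.cast_nonneg n)

theorem PdTwist.main_of {d : ℕ} (tw : PdTwist C d) (m : ℤ) (hm : m ≤ 0)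
    (α : tw.P.functor.obj tw.E ≅ tw.E⟦m⟧) {t : ℝ} (ht : 0 < t) (G : C)
    (hG : IsSplitGenerator C G) :
      atTop.limsup (fun n : ℕ =>
          ((Real.log (complexity C G ((fun X => tw.P.functor.obj X)^[n] G) t) / n : ℝ) : EReal))
        ≤ (0 : EReal) := by
  obtain ⟨c, hc0, hc⟩ := att_shift hG t tw.E
  choose k ns he hcount using tw.H_iso
  have hcmp : ∀ F, k (tw.P.functor.obj F) ≤ k F ∧
      ∑ i, Real.exp (ns (tw.P.functor.obj F) i * t) ≤ ∑ i, Real.exp (ns F i * t) := by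
    intro F
    refine ns_compare _ _ m (fun s => ?_) hm ht
    have h1 := hcount (tw.P.functor.obj F) (-s)
    have h2 := hcount F (-s + m)
    rw [neg_neg] at h1
    rw [show -(-s + m) = s - m by ring] at h2
    rw [h1, h2]
    exact tw.finrank_step m α F (-s)
  let it : ℕ → C := fun n => (fun X => tw.P.functor.obj X)^[n] G
  have hit : ∀ n, it (n+1) = tw.P.functor.obj (it n) := fun n => Function.iterate_succ_apply' _ _ _
  have hbd : ∀ n, k (it n) ≤ k G ∧
      ∑ i, Real.exp (ns (it n) i * t) ≤ ∑ i, Real.exp (ns G i * t) := by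
    intro n
    induction n with
    | zero => exact ⟨le_rfl, le_rfl⟩
    | succ n ih =>
      rw [hit]
      exact ⟨(hcmp _).1.trans ih.1, (hcmp _).2.trans ih.2⟩
  have hS : ∀ F, 0 ≤ ∑ i, Real.exp (ns F i * t) :=
    fun F => Finset.sum_nonneg (fun i _ => (Real.exp_pos _).le)
  obtain ⟨K, hKdef⟩ : ∃ K, K = c * (Real.exp t + 2 + 2 * (k G * k G)) * ∑ i, Real.exp (ns G i * t) :=
    ⟨_, rfl⟩
  have hK : 0 ≤ K := by
    rw [hKdef]
    exact mul_nonneg (by positivity) (hS G)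
  have hrb : ∀ n : ℕ, Rb G t (it n) (1 + K * n) := by
    intro n
    induction n with
    | zero =>
      rw [Nat.cast_zero, mul_zero, add_zero]
      exact rb_self G t
    | succ n ih =>
      rw [hit]
      obtain ⟨B0, r', hr, hB, ρ⟩ := tw.rb_step hc0 hc (it n) (ns (it n)) (he (it n)).some ih
      refine ⟨B0, r', hr.trans ?_, hB, ρ⟩
      have h1 : (k (it n) : ℝ) ≤ k G := by exact_mod_cast (hbd n).1
      have h2 : c * (Real.exp t + 2 + 2 * (k (it n) * k (it n))) *
          ∑ i, Real.exp (ns (it n) i * t) ≤ K := by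
        rw [hKdef]
        refine mul_le_mul ?_ (hbd n).2 (hS _) (by positivity)
        gcongr
      push_cast
      linarith
  exact limsup_bound _ K hK (fun n => complexity_nonneg _ _ _) (fun n => complexity_le (hrb n))

end Aux

set_option linter.unusedSectionVars false

section Aux
variable {C}

/-- all morphisms from `X` to `Y` vanish. -/
def Van (X Y : C) : Prop := ∀ f : X ⟶ Y, f = 0

theorem Van.retr_left {X X' Y : C} (h : Van X' Y) (ρ : Retract X X') : Van X Y := by
  intro f
  have h1 : ρ.i ≫ ρ.r ≫ f = f := by simp
  rw [← h1, h (ρ.r ≫ f), comp_zero]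

theorem Van.retr_right {X Y Y' : C} (h : Van X Y') (ρ : Retract Y Y') : Van X Y := by
  intro f
  have h1 : (f ≫ ρ.i) ≫ ρ.r = f := by simp
  rw [← h1, h (f ≫ ρ.i), zero_comp]

theorem Van.biproduct_left {k : ℕ} {S : Fin k → C} {Y : C} (h : ∀ i, Van (S i) Y) :
    Van (biproduct S) Y := by
  intro f
  ext i
  rw [h i (biproduct.ι S i ≫ f), comp_zero]

theorem Van.biproduct_right {k : ℕ} {S : Fin k → C} {Y : C} (h : ∀ i, Van Y (S i)) :
    Van Y (biproduct S) := by
  intro f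
  ext i
  rw [h i (f ≫ biproduct.π S i), zero_comp]

theorem Van.dist_right {A B X : C} {f : A ⟶ B} {g : B ⟶ X} {h : X ⟶ A⟦(1:ℤ)⟧}
    (hT : Triangle.mk f g h ∈ distTriang C) {W : C} (h1 : Van W A) (h2 : Van W X) : Van W B := by
  intro x
  obtain ⟨z, hz⟩ := ex_fg hT x (h2 _)
  rw [hz, h1 z, zero_comp]

theorem Van.dist_left {A B X : C} {f : A ⟶ B} {g : B ⟶ X} {h : X ⟶ A⟦(1:ℤ)⟧}
    (hT : Triangle.mk f g h ∈ distTriang C) {W : C} (h1 : Van A W) (h2 : Van X W) : Van B W := by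
  intro x
  obtain ⟨z, hz⟩ := co_fg hT x (h1 _)
  rw [hz, h2 z, comp_zero]

theorem Van.functor {X Y : C} (h : Van X Y) (Φ : C ⥤ C) [Φ.Additive] [Φ.Full] :
    Van (Φ.obj X) (Φ.obj Y) := by
  intro f
  obtain ⟨f0, rfl⟩ := Φ.map_surjective f
  rw [h f0, Φ.map_zero]

theorem PdObject.van {d : ℕ} (p : PdObject C d) (a b : ℤ)
    (h : ¬ ∃ k : ℕ, k ≤ d ∧ b - a = 2 * (k : ℤ)) : Van (p.E⟦a⟧) (p.E⟦b⟧) := by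
  have h0 : Van p.E (p.E⟦b - a⟧) := p.hom_rank_zero _ h
  exact (h0.functor (shiftFunctor C a)).retr_right
    (Retract.ofIso ((shiftFunctorAdd' C (b - a) a b (by ring)).app p.E))

theorem PdObject.van_neg {d : ℕ} (p : PdObject C d) (a b : ℤ) (h : b < a) :
    Van (p.E⟦a⟧) (p.E⟦b⟧) := p.van a b (by rintro ⟨k, -, hk⟩; omega)

theorem finrank_to_biproduct_le {k : ℕ} (X : C) (S : Fin k → C) :
    Module.finrank ℂ (X ⟶ biproduct S) ≤ ∑ i, Module.finrank ℂ (X ⟶ S i) := by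
  let L : (X ⟶ biproduct S) →ₗ[ℂ] (∀ i, X ⟶ S i) :=
    { toFun := fun f i => f ≫ biproduct.π S i
      map_add' := by intros; ext; simp
      map_smul' := by intros; ext; simp }
  have hL : Function.Injective L := by
    intro f g hfg
    ext i
    exact congrFun hfg i
  refine (LinearMap.finrank_le_finrank_of_injective hL).trans ?_
  rw [Module.finrank_pi_fintype]

theorem PdObject.peel {d : ℕ} (p : PdObject C d) (c : ℤ) (W : C)
    (hW : ∀ y, c < y → Van (p.E⟦y⟧) W) :
    ∃ (N : ℕ) (k : biproduct (fun _ : Fin N => p.E⟦c⟧) ⟶ W) (W' : C) (q : W ⟶ W')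
      (w : W' ⟶ (biproduct (fun _ : Fin N => p.E⟦c⟧))⟦(1:ℤ)⟧),
      Triangle.mk k q w ∈ distTriang C ∧ (∀ y, c ≤ y → Van (p.E⟦y⟧) W') ∧
      (∀ f : p.E⟦c⟧ ⟶ W, ∃ s, f = s ≫ k) := by
  obtain ⟨N, k, hN, hk1, -⟩ := exists_univ_map (p.E⟦c⟧) W
  obtain ⟨W', q, w, hT⟩ := distinguished_cocone_triangle k
  refine ⟨N, k, W', q, w, hT, ?_, hk1⟩
  have hinj : ∀ x : p.E⟦c⟧ ⟶ biproduct (fun _ : Fin N => p.E⟦c⟧), x ≫ k = 0 → x = 0 := by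
    intro x hx
    have h1 := LinearMap.finrank_range_add_finrank_ker (Linear.rightComp ℂ (p.E⟦c⟧) k)
    have h2 : LinearMap.range (Linear.rightComp ℂ (p.E⟦c⟧) k) = ⊤ := by
      rw [LinearMap.range_eq_top]
      intro f
      obtain ⟨s, hs⟩ := hk1 f
      exact ⟨s, hs.symm⟩
    rw [h2, finrank_top, ← hN] at h1
    have h3 : Module.finrank ℂ (p.E⟦c⟧ ⟶ biproduct (fun _ : Fin N => p.E⟦c⟧)) ≤ N := by
      refine (finrank_to_biproduct_le _ _).trans ?_
      refine (Finset.sum_le_sum (fun i _ => p.finrank_shift_le_one c c)).trans ?_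
      simp
    have h4 : Module.finrank ℂ (LinearMap.ker (Linear.rightComp ℂ (p.E⟦c⟧) k)) = 0 := by omega
    rw [Submodule.finrank_eq_zero] at h4
    have h5 : x ∈ LinearMap.ker (Linear.rightComp ℂ (p.E⟦c⟧) k) := hx
    rw [h4] at h5
    exact h5
  intro y hy x
  have key : x ≫ w = 0 := by
    by_cases hy1 : y = c + 1
    · subst hy1
      let e := (shiftFunctorAdd C c 1).app p.E
      obtain ⟨x0, hx0⟩ := (shiftFunctor C (1:ℤ)).map_surjective (e.inv ≫ x ≫ w)
      have h1 : x0 ≫ k = 0 := by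
        apply (shiftFunctor C (1:ℤ)).map_injective
        rw [Functor.map_comp, hx0, Category.assoc, Category.assoc, z_hf hT]
        simp
      rw [hinj x0 h1, Functor.map_zero] at hx0
      rw [← cancel_epi e.inv, ← hx0, comp_zero]
    · obtain ⟨ρ⟩ := retr_shift_biproduct (fun _ : Fin N => c) (Iso.refl (biproduct (fun _ : Fin N => p.E⟦c⟧))) 1
      have : Van (p.E⟦y⟧) ((biproduct (fun _ : Fin N => p.E⟦c⟧))⟦(1:ℤ)⟧) := by
        refine (Van.biproduct_right (fun i => ?_)).retr_right ρ
        refine p.van _ _ ?_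
        rintro ⟨j, -, hj⟩
        omega
      exact this _
  obtain ⟨z, hz⟩ := ex_gh hT x key
  rcases hy.eq_or_lt with h | h
  · subst h
    obtain ⟨s, hs⟩ := hk1 z
    rw [hz, hs, Category.assoc, z_fg hT, comp_zero]
  · rw [hz, hW y h z, zero_comp]

/-- If `Q` is bounded with respect to `E`, has no negative self-extensions and scalar
endomorphisms, then it is a shift of `E`. -/
theorem PdObject.brick {d : ℕ} (p : PdObject C d) (Q : C) (hQ0 : ¬ Van Q Q) (hQs : Scal Q)
    (hneg : ∀ i : ℤ, i < 0 → Van Q (Q⟦i⟧)) (M M' : ℤ)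
    (hl : ∀ W, (∀ y, M ≤ y → Van (p.E⟦y⟧) W) → Van Q W)
    (hr : ∀ y, M' < y → Van (p.E⟦y⟧) Q)
    (hQr : (∀ x : ℤ, Van Q (p.E⟦x⟧)) → Van Q Q) :
    ∃ a : ℤ, a ≤ M' ∧ Nonempty (Q ≅ p.E⟦a⟧) := by
  obtain ⟨a, ha, hamax⟩ := Int.exists_greatest_of_bdd (P := fun y => ¬ Van (p.E⟦y⟧) Q)
    ⟨M', fun y hy => by by_contra h; exact hy (hr y (by omega))⟩ (by
      by_contra h
      push Not at h
      exact hQ0 (hl Q (fun y _ => h y)))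
  obtain ⟨b, hb, hbmin⟩ := Int.exists_least_of_bdd (P := fun x => ¬ Van Q (p.E⟦x⟧))
    ⟨M, fun x hx => by
      by_contra h
      exact hx (hl _ (fun y hy => p.van_neg _ _ (by omega)))⟩ (by
      by_contra h
      push Not at h
      exact hQ0 (hQr h))
  have ha' : ∀ y, a < y → Van (p.E⟦y⟧) Q := by
    intro y hy
    by_contra h
    have := hamax y h
    omega
  have hb' : ∀ x, x < b → Van Q (p.E⟦x⟧) := by
    intro y hy
    by_contra h
    have := hbmin y h
    omega
  have hD : ∀ (n : ℕ) (W : C), (∀ y, min M b + n ≤ y → Van (p.E⟦y⟧) W) → min M b + n ≤ b →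
      Van Q W := by
    intro n
    induction n with
    | zero =>
      intro W hW _
      refine hl W (fun y hy => hW y ?_)
      have := min_le_left M b
      push_cast
      omega
    | succ n ih =>
      intro W hW hn
      push_cast at hW hn
      obtain ⟨N, k, W', q, w, hT, hW', -⟩ := p.peel (min M b + n) W (fun y hy => hW y (by omega))
      refine Van.dist_right hT (Van.biproduct_right (fun i => hb' _ (by omega))) ?_
      exact ih W' hW' (by omega)
  have hDb : ∀ W : C, (∀ y, b ≤ y → Van (p.E⟦y⟧) W) → Van Q W := by
    intro W hW
    have h1 := min_le_right M b
    have h2 : min M b + ((b - min M b).toNat : ℤ) = b := by omega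
    exact hD (b - min M b).toNat W (by rw [h2]; exact hW) h2.le
  have hab : b ≤ a := by
    by_contra h
    exact hQ0 (hDb Q (fun y hy => ha' y (by omega)))
  obtain ⟨N, k, W', q, w, hT, hW', hk1⟩ := p.peel a Q ha'
  have hN : 0 < N := by
    rcases Nat.eq_zero_or_pos N with h | h
    · subst h
      exfalso
      apply ha
      intro f
      obtain ⟨s, hs⟩ := hk1 f
      rw [hs, Van.biproduct_right (fun i => i.elim0) s, zero_comp]
    · exact h
  have hba : a = b := by
    by_contra hne
    have hlt : b < a := by omega
    apply hb
    obtain ⟨f', g', h', hT1⟩ := shift_dist hT (b - a)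
    obtain ⟨w', q', hT'⟩ : ∃ (w' : (W'⟦b - a⟧)⟦(-1:ℤ)⟧ ⟶ (biproduct (fun _ : Fin N => p.E⟦a⟧))⟦b - a⟧)
        (q' : Q⟦b - a⟧ ⟶ ((W'⟦b - a⟧)⟦(-1:ℤ)⟧)⟦(1:ℤ)⟧), Triangle.mk w' f' q' ∈ distTriang C :=
      ⟨_, _, inv_rot_of_distTriang _ hT1⟩
    have hvW : Van Q ((W'⟦b - a⟧)⟦(-1:ℤ)⟧) := by
      suffices h : Van Q (W'⟦b - a - 1⟧) from h.retr_right
        (Retract.ofIso ((shiftFunctorAdd' C (b - a) (-1) (b - a - 1) (by ring)).symm.app W'))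
      refine hDb _ (fun y hy => ?_)
      exact ((hW' (y - (b - a - 1)) (by omega)).functor (shiftFunctor C (b - a - 1))).retr_left
        (Retract.ofIso ((shiftFunctorAdd' C (y - (b - a - 1)) (b - a - 1) y (by ring)).app p.E))
    have hvB : Van Q ((biproduct (fun _ : Fin N => p.E⟦a⟧))⟦b - a⟧) :=
      Van.dist_right hT' hvW (hneg _ (by omega))
    refine hvB.retr_right ?_
    refine (Retract.ofIso ((shiftFunctorAdd' C a (b - a) b (by ring)).app p.E)).trans ?_
    exact Retract.map ⟨biproduct.ι (fun _ : Fin N => p.E⟦a⟧) ⟨0, hN⟩, biproduct.π _ ⟨0, hN⟩, by simp⟩ _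
  refine ⟨a, ?_, ?_⟩
  · by_contra h
    exact ha (hr a (by omega))
  have hvan : Van Q W' := hDb W' (fun y hy => hW' y (by omega))
  obtain ⟨s, hs⟩ := ex_fg hT (𝟙 Q) (hvan _)
  have hid : 𝟙 Q ≠ 0 := by
    intro h
    apply hQ0
    intro f
    rw [← Category.id_comp f, h, zero_comp]
  obtain ⟨i, hi⟩ : ∃ i, (s ≫ biproduct.π (fun _ : Fin N => p.E⟦a⟧) i) ≫
      (biproduct.ι (fun _ : Fin N => p.E⟦a⟧) i ≫ k) ≠ 0 := by
    by_contra h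
    push Not at h
    apply hid
    rw [hs]
    have : s ≫ k = s ≫ (∑ i, biproduct.π (fun _ : Fin N => p.E⟦a⟧) i ≫
      biproduct.ι (fun _ : Fin N => p.E⟦a⟧) i) ≫ k := by rw [biproduct.total, Category.id_comp]
    rw [this, Preadditive.sum_comp, Preadditive.comp_sum]
    refine Finset.sum_eq_zero (fun i _ => ?_)
    rw [← h i]
    simp
  generalize s ≫ biproduct.π (fun _ : Fin N => p.E⟦a⟧) i = x at hi
  generalize biproduct.ι (fun _ : Fin N => p.E⟦a⟧) i ≫ k = y at hi
  obtain ⟨z, hz⟩ := hQs (x ≫ y)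
  obtain ⟨z', hz'⟩ := scal_of_functor (shiftFunctor C a) p.scal (Iso.refl _) (y ≫ x)
  have hz0 : z ≠ 0 := by
    rintro rfl
    exact hi (by rw [hz, zero_smul])
  have hx0 : x ≠ 0 := by
    rintro rfl
    exact hi zero_comp
  have hzz : z = z' := by
    have h1 : z • x = z' • x := by
      have := Category.assoc x y x
      rw [hz, hz'] at this
      simpa using this
    exact smul_left_injective ℂ hx0 h1
  subst hzz
  exact ⟨⟨x, z⁻¹ • y, by rw [Linear.comp_smul, hz, smul_smul, inv_mul_cancel₀ hz0, one_smul],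
    by rw [Linear.smul_comp, hz', smul_smul, inv_mul_cancel₀ hz0, one_smul]⟩⟩

theorem PdTwist.exists_shift {d : ℕ} (tw : PdTwist C d) :
    ∃ m : ℤ, m ≤ 0 ∧ Nonempty (tw.P.functor.obj tw.E ≅ tw.E⟦m⟧) := by
  obtain ⟨k, ns, ⟨e⟩, hcount⟩ := tw.H_iso tw.E
  have hns : ∀ i, ∃ j : ℕ, j ≤ d ∧ ns i = -(2 * (j : ℤ)) := by
    intro i
    have h1 := hcount (-(ns i))
    by_contra h
    have h2 : ¬ ∃ j : ℕ, j ≤ d ∧ -(ns i) = 2 * (j : ℤ) := by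
      rintro ⟨j, hj, hj'⟩
      exact h ⟨j, hj, by omega⟩
    have h3 := tw.hom_rank_zero _ h2
    have : Subsingleton (tw.E ⟶ tw.E⟦-(ns i)⟧) := ⟨fun a b => by rw [h3 a, h3 b]⟩
    rw [Module.finrank_zero_of_subsingleton, Finset.card_eq_zero] at h1
    have h4 : i ∈ (Finset.univ.filter fun j => ns j = -(-(ns i))) := by simp
    rw [h1] at h4
    simp at h4
  have hT0 : Triangle.mk (tw.η tw.E) (tw.dl tw.E) (-(tw.ev tw.E)⟦(1:ℤ)⟧') ∈ distTriang C :=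
    rot_of_distTriang _ (tw.outerTri tw.E)
  have hI0 : Triangle.mk (tw.ι tw.E) (tw.π tw.E) (-(tw.θ tw.E)⟦(1:ℤ)⟧') ∈ distTriang C :=
    rot_of_distTriang _ (tw.innerTri tw.E)
  obtain ⟨j, q, w, hI⟩ := shift_dist hI0 1
  obtain ⟨ρ1⟩ := retr_shift_biproduct ns e 1
  have e2 : (((tw.H tw.E)⟦(-2:ℤ)⟧)⟦(1:ℤ)⟧)⟦(1:ℤ)⟧ ≅ (tw.H tw.E)⟦(0:ℤ)⟧ :=
    (shiftFunctor C (1:ℤ)).mapIso ((shiftFunctorAdd' C (-2) 1 (-1) (by norm_num)).symm.app _) ≪≫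
      (shiftFunctorAdd' C (-1) 1 0 (by norm_num)).symm.app _
  obtain ⟨ρ2'⟩ := retr_shift_biproduct ns e 0
  have ρ2 := (Retract.ofIso e2).trans ρ2'
  have ρE : Retract tw.E (tw.E⟦(0:ℤ)⟧) := Retract.ofIso ((shiftFunctorZero C ℤ).symm.app tw.E)
  have hleft : ∀ W, (∀ y, -(2 * (d:ℤ)) ≤ y → Van (tw.E⟦y⟧) W) → Van (tw.P.functor.obj tw.E) W := by
    intro W hW
    refine Van.dist_left hT0 ((hW 0 (by omega)).retr_left ρE) (Van.dist_left hI
      ((Van.biproduct_left (fun i => hW _ ?_)).retr_left ρ1)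
      ((Van.biproduct_left (fun i => hW _ ?_)).retr_left ρ2))
    all_goals
      obtain ⟨j, hj, hj'⟩ := hns i
      omega
  have hright : ∀ W, (∀ x : ℤ, x ≤ 1 → Van W (tw.E⟦x⟧)) → Van W (tw.P.functor.obj tw.E) := by
    intro W hW
    refine Van.dist_right hT0 ((hW 0 (by omega)).retr_right ρE) (Van.dist_right hI
      ((Van.biproduct_right (fun i => hW _ ?_)).retr_right ρ1)
      ((Van.biproduct_right (fun i => hW _ ?_)).retr_right ρ2))
    all_goals
      obtain ⟨j, hj, hj'⟩ := hns i
      omega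
  have hidE : 𝟙 tw.E ≠ 0 := fun h => tw.nonzero ((IsZero.iff_id_eq_zero _).mpr h)
  have hQ0 : ¬ Van (tw.P.functor.obj tw.E) (tw.P.functor.obj tw.E) := by
    intro h
    apply hidE
    apply tw.P.functor.map_injective
    rw [h (tw.P.functor.map (𝟙 tw.E)), tw.P.functor.map_zero]
  have hneg : ∀ i : ℤ, i < 0 → Van (tw.P.functor.obj tw.E) ((tw.P.functor.obj tw.E)⟦i⟧) := by
    intro i hi
    let _ := tw.commShift
    have h1 : Van tw.E (tw.E⟦i⟧) := tw.hom_rank_zero i (by rintro ⟨j, -, hj⟩; omega)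
    exact (h1.functor tw.P.functor).retr_right
      (Retract.ofIso ((tw.P.functor.commShiftIso i).symm.app tw.E))
  obtain ⟨a, ha, ⟨α⟩⟩ := tw.brick (tw.P.functor.obj tw.E) hQ0
    (scal_of_functor tw.P.functor tw.scal (Iso.refl _)) hneg (-(2 * (d:ℤ))) 1 hleft
    (fun y hy => hright _ (fun x hx => tw.van_neg _ _ (by omega)))
    (fun h => hright _ (fun x _ => h x))
  refine ⟨a, ?_, ⟨α⟩⟩
  by_contra hcon
  obtain rfl : a = 1 := by omega
  have hη : tw.η tw.E = 0 := by
    have h1 : Van tw.E (tw.E⟦(1:ℤ)⟧) := tw.hom_rank_zero 1 (by rintro ⟨j, -, hj⟩; omega)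
    exact (h1.retr_right (Retract.ofIso α)) _
  obtain ⟨s, hs⟩ := ex_fg (tw.outerTri tw.E) (𝟙 tw.E) (by rw [hη, comp_zero])
  have hfin : Module.finrank ℂ (tw.E⟦(1:ℤ)⟧ ⟶ (tw.T tw.E)⟦(1:ℤ)⟧) ≤ 1 := by
    refine (finrank_dist_le hI _).trans ?_
    have h1 : Module.finrank ℂ (tw.E⟦(1:ℤ)⟧ ⟶ (((tw.H tw.E)⟦(-2:ℤ)⟧)⟦(1:ℤ)⟧)⟦(1:ℤ)⟧) = 0 := by
      have h2 : Van (tw.E⟦(1:ℤ)⟧) ((((tw.H tw.E)⟦(-2:ℤ)⟧)⟦(1:ℤ)⟧)⟦(1:ℤ)⟧) := by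
        refine (Van.biproduct_right (fun i => tw.van_neg _ _ ?_)).retr_right ρ2
        obtain ⟨j, hj, hj'⟩ := hns i
        omega
      have : Subsingleton (tw.E⟦(1:ℤ)⟧ ⟶ (((tw.H tw.E)⟦(-2:ℤ)⟧)⟦(1:ℤ)⟧)⟦(1:ℤ)⟧) :=
        ⟨fun a b => by rw [h2 a, h2 b]⟩
      exact Module.finrank_zero_of_subsingleton
    rw [h1, add_zero]
    refine (finrank_retract_le (Retract.refl _) ρ1).trans ((finrank_to_biproduct_le _ _).trans ?_)
    have h3 : ∀ i, Module.finrank ℂ (tw.E⟦(1:ℤ)⟧ ⟶ tw.E⟦ns i + 1⟧) ≤ if ns i = -0 then 1 else 0 := by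
      intro i
      split_ifs with h
      · exact tw.finrank_shift_le_one _ _
      · have h2 : Van (tw.E⟦(1:ℤ)⟧) (tw.E⟦ns i + 1⟧) := by
          refine tw.van_neg _ _ ?_
          obtain ⟨j, hj, hj'⟩ := hns i
          omega
        have : Subsingleton (tw.E⟦(1:ℤ)⟧ ⟶ tw.E⟦ns i + 1⟧) := ⟨fun a b => by rw [h2 a, h2 b]⟩
        rw [Module.finrank_zero_of_subsingleton]
    refine (Finset.sum_le_sum (fun i _ => h3 i)).trans ?_
    rw [← Finset.card_filter, hcount 0]
    exact tw.finrank_le_one 0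
  have hu0 : α.inv ≫ tw.dl tw.E ≠ 0 := by
    intro h
    obtain ⟨z, hz⟩ := ex_gh (tw.outerTri tw.E) α.inv h
    apply hQ0
    intro f
    have : α.hom ≫ α.inv = 𝟙 _ := α.hom_inv_id
    rw [hz, hη, comp_zero, comp_zero] at this
    rw [← Category.id_comp f, ← this, zero_comp]
  have hfin1 : Module.finrank ℂ (tw.E⟦(1:ℤ)⟧ ⟶ (tw.T tw.E)⟦(1:ℤ)⟧) = 1 := by
    refine le_antisymm hfin ?_
    have : Nontrivial (tw.E⟦(1:ℤ)⟧ ⟶ (tw.T tw.E)⟦(1:ℤ)⟧) := ⟨⟨_, _, hu0⟩⟩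
    exact Module.finrank_pos
  obtain ⟨z, hz⟩ := (finrank_eq_one_iff_of_nonzero' _ hu0).mp hfin1 (s⟦(1:ℤ)⟧')
  apply hidE
  apply (shiftFunctor C (1:ℤ)).map_injective
  rw [hs, Functor.map_comp, ← hz, Linear.smul_comp, Category.assoc, z_hf (tw.outerTri tw.E)]
  simp

end Aux

/-- For every `t > 0`, `h_t(P_ℰ) ≤ 0` (stated as a `limsup` bound on
the defining sequence of the categorical entropy, for any split generator). -/
theorem entropy_PdTwist_le_zero (d : ℕ) (tw : PdTwist C d) (t : ℝ) (ht : 0 < t) :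
    ∀ G : C, IsSplitGenerator C G →
      atTop.limsup (fun n : ℕ =>
          ((Real.log (complexity C G ((fun X => tw.P.functor.obj X)^[n] G) t) / n : ℝ) : EReal))
        ≤ (0 : EReal) := by
  intro G hG
  obtain ⟨m, hm, ⟨α⟩⟩ := tw.exists_shift
  exact tw.main_of m hm α ht G hG
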